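/- For integers n, m ≥ 3 and positive integers k₁, k₂: d_{2k₁,2k₂} ≤ (Vol S̃q / Vol B_𝓜)^{1/D_𝓜} ≤ e_{2k₁,2k₂}, where in the case k₁ = k₂ = 1: d = 2^{−8}·6^{−1/2}·√(nm+n+m)/((n+4)(m+4)) and e = 2^{10}·√6/√(nm+n+m); and otherwise: d = (k₁!·k₂!)^{3/2}/(2√6·4^{2k₁+2k₂}·√((2k₁)!·(2k₂)!)) · n^{k₁/2}·m^{k₂/2}/((n/2+2k₁)^{k₁}·(m/2+2k₂)^{k₂}) and e = 2√6·4^{2k₁+2k₂}·√((2k₁)!·(2k₂)!/(k₁!·k₂!))·n^{−k₁/2}·m^{−k₂/2}. -/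

import Mathlib

open MeasureTheory MvPolynomial

noncomputable section

namespace BiformPaper

/-- The weight function on the variables: the `x`-variables get weight `(1,0)` and the
`y`-variables get weight `(0,1)`. -/
def bw (n m : ℕ) : Fin n ⊕ Fin m → ℕ × ℕ := Sum.elim (fun _ => (1, 0)) (fun _ => (0, 1))

/-- The set of biforms of bidegree `(k₁, k₂)`: real polynomials in
`x = (x₁, …, xₙ)` and `y = (y₁, …, y_m)`, homogeneous of degree `k₁` in `x` and of degree
`k₂` in `y`. -/
def Biform (n m k₁ k₂ : ℕ) : Set (MvPolynomial (Fin n ⊕ Fin m) ℝ) :=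
  {f | MvPolynomial.IsWeightedHomogeneous (bw n m) f (k₁, k₂)}

/-- Evaluation of a polynomial at a point `(x, y) ∈ ℝⁿ × ℝᵐ`. -/
def beval {n m : ℕ} (f : MvPolynomial (Fin n ⊕ Fin m) ℝ) (x : Fin n → ℝ) (y : Fin m → ℝ) : ℝ :=
  eval (Sum.elim x y) f

/-- The Euclidean unit sphere `S^{n-1}` in `ℝⁿ`. -/
def unitSphere (n : ℕ) : Set (Fin n → ℝ) := {x | ∑ i, x i ^ 2 = 1}

/-- `σ` is the normalized uniform measure on the unit sphere `S^{n-1} ⊆ ℝⁿ`, i.e., the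
unique rotation-invariant Borel probability measure concentrated on the sphere. -/
structure IsSphereMeasure (n : ℕ) (σ : Measure (Fin n → ℝ)) : Prop where
  prob : IsProbabilityMeasure σ
  onSphere : σ (unitSphere n)ᶜ = 0
  invariant : ∀ Q : Matrix (Fin n) (Fin n) ℝ, Q * Q.transpose = 1 → σ.map Q.mulVec = σ

/-- The average `∫_T f dσ` of `f` over `T = S^{n-1} × S^{m-1}` (with `σ` the product of the
normalized sphere measures `σ₁`, `σ₂`). -/
def bavg {n m : ℕ} (σ₁ : Measure (Fin n → ℝ)) (σ₂ : Measure (Fin m → ℝ))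
    (f : MvPolynomial (Fin n ⊕ Fin m) ℝ) : ℝ :=
  ∫ x, ∫ y, beval f x y ∂σ₂ ∂σ₁

/-- The `L²(σ)` inner product `⟨f, g⟩ = ∫_T f·g dσ` on biforms. -/
def bip {n m : ℕ} (σ₁ : Measure (Fin n → ℝ)) (σ₂ : Measure (Fin m → ℝ))
    (f g : MvPolynomial (Fin n ⊕ Fin m) ℝ) : ℝ :=
  ∫ x, ∫ y, beval f x y * beval g x y ∂σ₂ ∂σ₁

/-- The cone `Pos^{(n,m)}_{(2k₁,2k₂)}` of nonnegative biforms of bidegree `(2k₁, 2k₂)`. -/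
def PosSet (n m k₁ k₂ : ℕ) : Set (MvPolynomial (Fin n ⊕ Fin m) ℝ) :=
  {f | f ∈ Biform n m (2 * k₁) (2 * k₂) ∧ ∀ x y, 0 ≤ beval f x y}

/-- The cone `Sq^{(n,m)}_{(2k₁,2k₂)}` of finite sums of squares of biforms of bidegree
`(k₁, k₂)`. -/
def SqSet (n m k₁ k₂ : ℕ) : Set (MvPolynomial (Fin n ⊕ Fin m) ℝ) :=
  {f | ∃ (N : ℕ) (g : Fin N → MvPolynomial (Fin n ⊕ Fin m) ℝ),
      (∀ i, g i ∈ Biform n m k₁ k₂) ∧ f = ∑ i, g i ^ 2}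

/-- The cone `Lf^{(n,m)}_{(2k₁,2k₂)}` of finite sums of products
`ℓᵢ(x)^{2k₁} · ℓ′ᵢ(y)^{2k₂}` of even powers of linear forms. -/
def LfSet (n m k₁ k₂ : ℕ) : Set (MvPolynomial (Fin n ⊕ Fin m) ℝ) :=
  {f | ∃ (N : ℕ) (a : Fin N → Fin n → ℝ) (b : Fin N → Fin m → ℝ),
      f = ∑ r, (∑ i, C (a r i) * X (Sum.inl i)) ^ (2 * k₁) *
               (∑ j, C (b r j) * X (Sum.inr j)) ^ (2 * k₂)}

/-- The biform `q = (x₁² + ⋯ + xₙ²)^{k₁} · (y₁² + ⋯ + y_m²)^{k₂}`. -/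
def qpoly (n m k₁ k₂ : ℕ) : MvPolynomial (Fin n ⊕ Fin m) ℝ :=
  (∑ i : Fin n, X (Sum.inl i) ^ 2) ^ k₁ * (∑ j : Fin m, X (Sum.inr j) ^ 2) ^ k₂

/-- The hyperplane `𝓜` of biforms of bidegree `(2k₁, 2k₂)` with average `0` on `T`. -/
def MSet (n m k₁ k₂ : ℕ) (σ₁ : Measure (Fin n → ℝ)) (σ₂ : Measure (Fin m → ℝ)) :
    Set (MvPolynomial (Fin n ⊕ Fin m) ℝ) :=
  {f | f ∈ Biform n m (2 * k₁) (2 * k₂) ∧ bavg σ₁ σ₂ f = 0}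

/-- The translated section `K̃ = {f ∈ 𝓜 : f + q ∈ K}` of a cone `K`. -/
def tilde (n m k₁ k₂ : ℕ) (σ₁ : Measure (Fin n → ℝ)) (σ₂ : Measure (Fin m → ℝ))
    (K : Set (MvPolynomial (Fin n ⊕ Fin m) ℝ)) : Set (MvPolynomial (Fin n ⊕ Fin m) ℝ) :=
  {f | f ∈ MSet n m k₁ k₂ σ₁ σ₂ ∧ f + qpoly n m k₁ k₂ ∈ K}

/-- The unit ball `B_𝓜` of `𝓜` in the `L²(σ)` norm. -/
def bball (n m k₁ k₂ : ℕ) (σ₁ : Measure (Fin n → ℝ)) (σ₂ : Measure (Fin m → ℝ)) :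
    Set (MvPolynomial (Fin n ⊕ Fin m) ℝ) :=
  {f | f ∈ MSet n m k₁ k₂ σ₁ σ₂ ∧ bip σ₁ σ₂ f f ≤ 1}

/-- `ψ : ℝ^D → Mset` is a unitary isomorphism: an injective linear map with range `Mset`
carrying the standard inner product of `ℝ^D` to the `L²(σ)` inner product.  Volumes of
Borel subsets `E` of `Mset` are computed as the Lebesgue measure of `ψ ⁻¹' E`
(by Lemma 1.1 of the paper this does not depend on the choice of `ψ`). -/
structure IsUnitaryParam (n m D : ℕ) (σ₁ : Measure (Fin n → ℝ)) (σ₂ : Measure (Fin m → ℝ))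
    (Mset : Set (MvPolynomial (Fin n ⊕ Fin m) ℝ))
    (ψ : (Fin D → ℝ) →ₗ[ℝ] MvPolynomial (Fin n ⊕ Fin m) ℝ) : Prop where
  inj : Function.Injective ψ
  range : Set.range ψ = Mset
  ip : ∀ a b : Fin D → ℝ, bip σ₁ σ₂ (ψ a) (ψ b) = ∑ i, a i * b i

/-- The apolar inner product `⟨r, s⟩_d = D_r(s)` on biforms, where `D_r` is the
differential operator obtained from `r` by replacing each variable by the corresponding
partial derivative; its value on a pair of forms of the same bidegree is
`∑_α r_α · s_α · α!`. -/
def apolar {n m : ℕ} (r s : MvPolynomial (Fin n ⊕ Fin m) ℝ) : ℝ :=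
  ∑ α ∈ r.support, coeff α r * coeff α s * α.prod fun _ k => (k.factorial : ℝ)

end BiformPaper

namespace BiformPaper

section
open ProbabilityTheory

lemma hasDerivAt_gaussianPDFReal (x : ℝ) :
    HasDerivAt (gaussianPDFReal 0 1) (-x * gaussianPDFReal 0 1 x) x := by
  have e : gaussianPDFReal 0 1 = fun x : ℝ => (√(2 * Real.pi))⁻¹ * Real.exp (-x ^ 2 / 2) := by
    ext x; simp [gaussianPDFReal]
  rw [e]
  have h := (((hasDerivAt_id x).pow 2).neg.div_const 2).exp.const_mul (√(2 * Real.pi))⁻¹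
  refine (h.congr_deriv ?_)
  simp only [Pi.neg_apply, Pi.pow_apply, id]
  ring

lemma integrable_pow_gaussianReal (k : ℕ) :
    Integrable (fun x : ℝ => x ^ k) (gaussianReal 0 1) := by
  have h := (memLp_id_gaussianReal (μ := 0) (v := 1) (k : NNReal)).integrable_norm_pow'
  refine (integrable_norm_iff (by fun_prop)).mp ?_
  simpa using h

lemma integral_pow_succ_gaussianReal (k : ℕ) :
    ∫ x : ℝ, x ^ (k + 1) ∂(gaussianReal 0 1) = k * ∫ x : ℝ, x ^ (k - 1) ∂(gaussianReal 0 1) := by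
  have hi : ∀ k : ℕ, Integrable (fun x : ℝ => gaussianPDFReal 0 1 x * x ^ k) := by
    intro k
    have := integrable_pow_gaussianReal k
    rw [gaussianReal_of_var_ne_zero _ one_ne_zero,
      integrable_withDensity_iff_integrable_smul₀' (by fun_prop) (by simp [gaussianPDF])] at this
    simpa [gaussianPDF, toReal_gaussianPDF, gaussianPDFReal_nonneg] using this
  have key := integral_mul_deriv_eq_deriv_mul_of_integrable
    (u := fun x : ℝ => x ^ k) (v := gaussianPDFReal 0 1) (u' := fun x => k * x ^ (k - 1))
    (v' := fun x => -x * gaussianPDFReal 0 1 x)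
    (fun x _ => by simpa using hasDerivAt_pow k x) (fun x _ => hasDerivAt_gaussianPDFReal x)
    ((hi (k + 1)).neg.congr (ae_of_all _ fun x => by simp only [Pi.mul_apply, Pi.neg_apply]; ring))
    (((hi (k - 1)).const_mul (k : ℝ)).congr (ae_of_all _ fun x => by simp only [Pi.mul_apply]; ring))
    ((hi k).congr (ae_of_all _ fun x => by simp only [Pi.mul_apply]; ring))
  rw [integral_gaussianReal_eq_integral_smul one_ne_zero,
    integral_gaussianReal_eq_integral_smul one_ne_zero, ← integral_const_mul]
  have e1 : ∀ x : ℝ, x ^ k * (-x * gaussianPDFReal 0 1 x) =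
      -(gaussianPDFReal 0 1 x • x ^ (k + 1)) := by
    intro x; simp only [smul_eq_mul]; ring
  simp_rw [e1, integral_neg] at key
  rw [neg_inj] at key
  rw [key]
  congr 1; ext x; simp only [smul_eq_mul]; ring

lemma exists_stein_functional (ι : Type) [Fintype ι] :
    ∃ G : MvPolynomial ι ℝ →ₗ[ℝ] ℝ, G 1 = 1 ∧ (∀ i f, G (X i * f) = G (pderiv i f)) ∧
      ∀ f, 0 ≤ G (f * f) := by
  classical
  set μ := Measure.pi (fun _ : ι => gaussianReal 0 1) with hμ
  have hmon : ∀ (s : ι →₀ ℕ) (a : ℝ) (x : ι → ℝ),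
      eval x (monomial s a) = a * ∏ i, x i ^ s i := by
    intro s a x
    rw [eval_monomial, Finsupp.prod_fintype _ _ (by simp)]
  have hI : ∀ f : MvPolynomial ι ℝ, Integrable (fun x => eval x f) μ := by
    intro f
    induction f using MvPolynomial.induction_on' with
    | monomial s a =>
      simp_rw [hmon]
      exact (Integrable.fintype_prod (f := fun i (x : ℝ) => x ^ s i)
        (fun i => integrable_pow_gaussianReal _)).const_mul a
    | add p q hp hq =>
      simp only [map_add]
      exact hp.add hq
  have hprod : ∀ s : ι →₀ ℕ, ∫ x, ∏ i, x i ^ s i ∂μ =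
      ∏ i, ∫ x : ℝ, x ^ s i ∂(gaussianReal 0 1) := fun s =>
    integral_fintype_prod_eq_prod (f := fun j (x : ℝ) => x ^ s j)
  let G : MvPolynomial ι ℝ →ₗ[ℝ] ℝ :=
    { toFun := fun f => ∫ x, eval x f ∂μ
      map_add' := fun f g => by simpa using integral_add (hI f) (hI g)
      map_smul' := fun c f => by simp [smul_eval, integral_const_mul] }
  refine ⟨G, by simp [G], ?_, ?_⟩
  · intro i f
    induction f using MvPolynomial.induction_on' with
    | monomial s a =>
      have hX : X i * monomial s a = monomial (s + Finsupp.single i 1) a := by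
        rw [X, monomial_mul, add_comm, one_mul]
      rw [hX, pderiv_monomial]
      simp only [G, LinearMap.coe_mk, AddHom.coe_mk]
      simp_rw [hmon, integral_const_mul, hprod]
      rw [← Finset.mul_prod_erase _ _ (Finset.mem_univ i),
        ← Finset.mul_prod_erase _ _ (Finset.mem_univ i)]
      simp only [Finsupp.add_apply, Finsupp.single_eq_same, Finsupp.tsub_apply]
      rw [integral_pow_succ_gaussianReal]
      have : ∀ j ∈ Finset.univ.erase i,
          (∫ x : ℝ, x ^ (s j + (Finsupp.single i 1 : ι →₀ ℕ) j) ∂(gaussianReal 0 1)) =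
          ∫ x : ℝ, x ^ (s j - (Finsupp.single i 1 : ι →₀ ℕ) j) ∂(gaussianReal 0 1) := by
        intro j hj
        rw [Finsupp.single_eq_of_ne (Finset.ne_of_mem_erase hj)]; simp
      rw [Finset.prod_congr rfl this]
      ring
    | add p q hp hq => simp only [mul_add, map_add, hp, hq]
  · intro f
    simp only [G, LinearMap.coe_mk, AddHom.coe_mk, map_mul]
    exact integral_nonneg fun x => mul_self_nonneg _

end

/-- A linear functional on polynomials satisfying the Gaussian integration by parts formula. -/
structure IsStein {ι : Type} (G : MvPolynomial ι ℝ →ₗ[ℝ] ℝ) : Prop where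
  one : G 1 = 1
  stein : ∀ i f, G (X i * f) = G (pderiv i f)
  nonneg : ∀ f, 0 ≤ G (f * f)

/-- The Laplacian in the variables belonging to `s`. -/
def lap {ι : Type} (s : Finset ι) : MvPolynomial ι ℝ →ₗ[ℝ] MvPolynomial ι ℝ :=
  ∑ i ∈ s, (pderiv i).toLinearMap ∘ₗ (pderiv i).toLinearMap

lemma lap_apply {ι : Type} (s : Finset ι) (f : MvPolynomial ι ℝ) :
    lap s f = ∑ i ∈ s, pderiv i (pderiv i f) := by
  simp [lap]

lemma pderiv_comm {ι : Type} (i j : ι) (f : MvPolynomial ι ℝ) :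
    pderiv i (pderiv j f) = pderiv j (pderiv i f) := by
  ext m
  simp only [coeff_pderiv]
  rw [add_right_comm]
  by_cases h : i = j
  · subst h; rfl
  · simp [Finsupp.single_eq_of_ne h, Finsupp.single_eq_of_ne (Ne.symm h)]; ring

lemma lap_pderiv {ι : Type} (s : Finset ι) (i : ι) (f : MvPolynomial ι ℝ) :
    lap s (pderiv i f) = pderiv i (lap s f) := by
  simp only [lap_apply, map_sum]
  refine Finset.sum_congr rfl fun j _ => ?_
  rw [pderiv_comm j i f, pderiv_comm j i]

/-- The Cauchy–Schwarz inequality for a functional nonnegative on squares. -/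
lemma cauchy_schwarz_of_nonneg_sq {ι : Type} {G : MvPolynomial ι ℝ →ₗ[ℝ] ℝ}
    (hG : ∀ f, 0 ≤ G (f * f)) (f g : MvPolynomial ι ℝ) :
    G (f * g) ^ 2 ≤ G (f * f) * G (g * g) := by
  have := LinearMap.BilinForm.apply_mul_apply_le_of_forall_zero_le
    (B := (LinearMap.mul ℝ (MvPolynomial ι ℝ)).compr₂ G) (fun f => by simpa using hG f) f g
  simpa [mul_comm g f, sq] using this

section
variable {ι : Type} {G : MvPolynomial ι ℝ →ₗ[ℝ] ℝ}

lemma lap_isHomogeneous {e : ℕ} {u : MvPolynomial ι ℝ} (hu : u.IsHomogeneous e) (s : Finset ι) :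
    (lap s u).IsHomogeneous (e - 2) := by
  rw [lap_apply]
  exact IsHomogeneous.sum _ _ _ fun i _ => hu.pderiv.pderiv

variable [Fintype ι]

lemma IsStein.apply_mul_number (hG : IsStein G) {e : ℕ} {u : MvPolynomial ι ℝ}
    (hu : u.IsHomogeneous e) (v : MvPolynomial ι ℝ) :
    G (v * ((e : ℝ) • u - lap Finset.univ u)) = ∑ i, G (pderiv i v * pderiv i u) := by
  have h1 : (e : ℝ) • u = ∑ i, X i * pderiv i u := by
    rw [hu.sum_X_mul_pderiv, Nat.cast_smul_eq_nsmul]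
  rw [mul_sub, h1, map_sub, Finset.mul_sum, map_sum, lap_apply, Finset.mul_sum, map_sum,
    ← Finset.sum_sub_distrib]
  refine Finset.sum_congr rfl fun i _ => ?_
  rw [mul_left_comm, hG.stein, pderiv_mul, map_add]
  ring

lemma IsStein.number_bounds (hG : IsStein G) (e : ℕ) : ∀ u : MvPolynomial ι ℝ, u.IsHomogeneous e →
    G (((e : ℝ) • u - lap Finset.univ u) * ((e : ℝ) • u - lap Finset.univ u)) ≤
      e * ∑ i, G (pderiv i u * pderiv i u) ∧
    ∑ i, G (pderiv i u * pderiv i u) ≤ e * G (u * u) := by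
  induction e with
  | zero =>
    intro u hu
    have h0 : ∀ i, pderiv i u = 0 := by
      intro i
      rw [← totalDegree_zero_iff_isHomogeneous, totalDegree_eq_zero_iff_eq_C] at hu
      rw [hu, pderiv_C]
    simp [lap_apply, h0]
  | succ e ih =>
    intro u hu
    have hd : ∀ i, (pderiv i u).IsHomogeneous e := fun i => hu.pderiv
    have ha : 0 ≤ ∑ i, G (pderiv i u * pderiv i u) := Finset.sum_nonneg fun i _ => hG.nonneg _
    have h1 : G ((((e + 1 : ℕ) : ℝ) • u - lap Finset.univ u) *
        (((e + 1 : ℕ) : ℝ) • u - lap Finset.univ u)) ≤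
        (e + 1 : ℕ) * ∑ i, G (pderiv i u * pderiv i u) := by
      rw [hG.apply_mul_number hu, Finset.mul_sum]
      refine Finset.sum_le_sum fun i _ => ?_
      have : pderiv i (((e + 1 : ℕ) : ℝ) • u - lap Finset.univ u) =
          ((e : ℝ) • pderiv i u - lap Finset.univ (pderiv i u)) + pderiv i u := by
        rw [map_sub, Derivation.map_smul, lap_pderiv]
        push_cast
        rw [add_smul, one_smul]; ring
      rw [this, add_mul, map_add, mul_comm _ (pderiv i u), hG.apply_mul_number (hd i)]
      have := (ih _ (hd i)).2
      push_cast
      linarith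
    refine ⟨h1, ?_⟩
    have h2 := cauchy_schwarz_of_nonneg_sq hG.nonneg u
      (((e + 1 : ℕ) : ℝ) • u - lap Finset.univ u)
    rw [hG.apply_mul_number hu] at h2
    rcases ha.eq_or_lt with h | h
    · rw [← h]; exact mul_nonneg (Nat.cast_nonneg _) (hG.nonneg _)
    · have h3 := mul_le_mul_of_nonneg_left h1 (hG.nonneg u)
      refine le_of_mul_le_mul_right ?_ h
      nlinarith

lemma IsStein.sum_pderiv_le (hG : IsStein G) {e : ℕ} {u : MvPolynomial ι ℝ}
    (hu : u.IsHomogeneous e) : ∑ i, G (pderiv i u * pderiv i u) ≤ e * G (u * u) :=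
  (hG.number_bounds e u hu).2

lemma IsStein.lap_le (hG : IsStein G) {e : ℕ} {u : MvPolynomial ι ℝ} (hu : u.IsHomogeneous e) :
    G (lap Finset.univ u * lap Finset.univ u) ≤ e ^ 2 * G (u * u) := by
  have h1 := (hG.number_bounds e u hu).1
  have h2 := hG.apply_mul_number hu u
  have ha : 0 ≤ ∑ i, G (pderiv i u * pderiv i u) := Finset.sum_nonneg fun i _ => hG.nonneg _
  have h3 : lap Finset.univ u * lap Finset.univ u =
      ((e : ℝ) • u - lap Finset.univ u) * ((e : ℝ) • u - lap Finset.univ u) +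
      ((e : ℝ) ^ 2) • (u * u) - (2 * (e : ℝ)) • (u * ((e : ℝ) • u - lap Finset.univ u)) := by
    simp only [smul_eq_C_mul, map_mul, map_pow, map_ofNat]; ring
  rw [h3, map_sub, map_add, map_smul, map_smul, h2]
  simp only [smul_eq_mul]
  nlinarith [mul_nonneg (Nat.cast_nonneg e : (0 : ℝ) ≤ e) ha]

/-- Hypercontractivity: comparison of fourth and second moments of a form. -/
lemma IsStein.fourth_moment_le (hG : IsStein G) (e : ℕ) : ∀ u : MvPolynomial ι ℝ,
    u.IsHomogeneous e → G (u * u * (u * u)) ≤ (4 ^ e * G (u * u)) ^ 2 := by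
  induction e using Nat.strong_induction_on with
  | _ e ih =>
  intro u hu
  rcases Nat.eq_zero_or_pos e with rfl | he
  · rw [← totalDegree_zero_iff_isHomogeneous, totalDegree_eq_zero_iff_eq_C] at hu
    rw [hu]
    have hC : ∀ c : ℝ, G (C c) = c := fun c => by
      rw [C_eq_smul_one, map_smul, hG.one]; simp
    simp only [← map_mul, hC]
    apply le_of_eq; ring
  have he' : (0 : ℝ) < e := by exact_mod_cast he
  set A := G (u * u * (u * u)) with hA
  set Z := G (u * u) with hZ
  set L := lap Finset.univ u with hL
  have hA0 : 0 ≤ A := hG.nonneg _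
  have hZ0 : 0 ≤ Z := hG.nonneg _
  set s := √A with hs
  have hs0 : 0 ≤ s := Real.sqrt_nonneg _
  have hsA : s ^ 2 = A := Real.sq_sqrt hA0
  set W : ℝ := 4 ^ e * Z with hW
  have hW0 : 0 ≤ W := by positivity
  have hgrad : ∑ i, G (u * u * (pderiv i u * pderiv i u)) ≤ s * (e * W / 4) := by
    have h : ∀ i, G (u * u * (pderiv i u * pderiv i u)) ≤
        s * (4 ^ (e - 1) * G (pderiv i u * pderiv i u)) := by
      intro i
      have h1 := cauchy_schwarz_of_nonneg_sq hG.nonneg (u * u) (pderiv i u * pderiv i u)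
      have h2 := ih (e - 1) (by omega) (pderiv i u) hu.pderiv
      refine abs_le_of_sq_le_sq' ?_ (mul_nonneg hs0 (mul_nonneg (by positivity) (hG.nonneg _))) |>.2
      rw [mul_pow, hsA]
      exact h1.trans (mul_le_mul_of_nonneg_left h2 hA0)
    refine (Finset.sum_le_sum fun i _ => h i).trans ?_
    rw [← Finset.mul_sum, ← Finset.mul_sum]
    refine mul_le_mul_of_nonneg_left ?_ hs0
    have h4 : (4 : ℝ) ^ e = 4 * 4 ^ (e - 1) := by
      rw [← pow_succ']; congr 1; omega
    rw [hW, h4]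
    have := mul_le_mul_of_nonneg_left (hG.sum_pderiv_le hu)
      (by positivity : (0 : ℝ) ≤ 4 ^ (e - 1))
    linarith
  set p := √(G (u * L * (u * L))) with hp
  have hp0 : 0 ≤ p := Real.sqrt_nonneg _
  have hp2 : p ^ 2 = G (u * L * (u * L)) := Real.sq_sqrt (hG.nonneg _)
  have hlap1 : G (u * u * (u * L)) ≤ s * p := by
    refine abs_le_of_sq_le_sq' ?_ (mul_nonneg hs0 hp0) |>.2
    rw [mul_pow, hsA, hp2]
    exact cauchy_schwarz_of_nonneg_sq hG.nonneg _ _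
  have hlap4 : G (L * L * (L * L)) ≤ (e ^ 2 * W / 16) ^ 2 := by
    rcases Nat.lt_or_ge e 2 with h2 | h2
    · have : L = 0 := by
        have he1 : e = 1 := by omega
        rw [hL, lap_apply]
        refine Finset.sum_eq_zero fun i _ => ?_
        have h0 : (pderiv i u).IsHomogeneous 0 := by
          have := hu.pderiv (i := i); rwa [he1] at this
        rw [← totalDegree_zero_iff_isHomogeneous, totalDegree_eq_zero_iff_eq_C] at h0
        rw [h0, pderiv_C]
      rw [this]; simp; positivity
    · refine (ih (e - 2) (by omega) _ (lap_isHomogeneous hu _)).trans ?_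
      refine pow_le_pow_left₀ (mul_nonneg (by positivity) (hG.nonneg _)) ?_ 2
      have h4 : (4 : ℝ) ^ e = 16 * 4 ^ (e - 2) := by
        have : e = (e - 2) + 2 := by omega
        conv_lhs => rw [this, pow_add]
        ring
      rw [hW, h4]
      have := mul_le_mul_of_nonneg_left (hG.lap_le hu)
        (by positivity : (0 : ℝ) ≤ 4 ^ (e - 2))
      linarith
  have hlap2 : p ^ 2 ≤ s * (e ^ 2 * W / 16) := by
    rw [hp2, show u * L * (u * L) = u * u * (L * L) by ring]
    refine abs_le_of_sq_le_sq' ?_ (by positivity) |>.2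
    rw [mul_pow, hsA]
    exact (cauchy_schwarz_of_nonneg_sq hG.nonneg _ _).trans (mul_le_mul_of_nonneg_left hlap4 hA0)
  have hmain : e * A = G (u * u * (u * L)) + 3 * ∑ i, G (u * u * (pderiv i u * pderiv i u)) := by
    have h1 := hG.apply_mul_number hu (u * u * u)
    have h2 : ∀ i, G (pderiv i (u * u * u) * pderiv i u) =
        3 * G (u * u * (pderiv i u * pderiv i u)) := by
      intro i
      rw [show pderiv i (u * u * u) * pderiv i u = (3 : ℝ) • (u * u * (pderiv i u * pderiv i u)) by
        simp only [pderiv_mul, smul_eq_C_mul, map_ofNat]; ring, map_smul, smul_eq_mul]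
    simp_rw [h2, ← Finset.mul_sum] at h1
    rw [← h1, mul_sub, map_sub, mul_smul_comm, map_smul, smul_eq_mul,
      show u * u * u * u = u * u * (u * u) by ring, show u * u * u * lap Finset.univ u =
        u * u * (u * L) by ring]
    ring
  suffices h : s ≤ W by
    rw [← hsA]; exact pow_le_pow_left₀ hs0 h 2
  by_contra! hlt
  have hspos : 0 < s := lt_of_le_of_lt hW0 hlt
  have hple : p < s * e / 4 := by
    refine lt_of_pow_lt_pow_left₀ 2 (by positivity) (lt_of_le_of_lt hlap2 ?_)
    have : s * (e ^ 2 * W / 16) < s * (e ^ 2 * s / 16) := by gcongr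
    calc _ < _ := this
      _ = _ := by ring
  have h1 : s * p < s * (s * e / 4) := by gcongr
  have h2 : s * (e * W / 4) < s * (e * s / 4) := by gcongr
  rw [← hsA] at hmain
  nlinarith
end

/-- The apolar bilinear form `∑ α, α! * f_α * h_α`. -/
def apol {ι : Type} :
    MvPolynomial ι ℝ →ₗ[ℝ] MvPolynomial ι ℝ →ₗ[ℝ] ℝ :=
  (basisMonomials ι ℝ).constr ℝ fun α => (α.prod fun _ k => (k.factorial : ℝ)) • lcoeff ℝ α

section
variable {ι : Type}

lemma apol_monomial (α : ι →₀ ℕ) (a : ℝ) (h : MvPolynomial ι ℝ) :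
    apol (monomial α a) h = a * ((α.prod fun _ k => (k.factorial : ℝ)) * coeff α h) := by
  have h1 : apol (monomial α (1 : ℝ)) = (α.prod fun _ k => (k.factorial : ℝ)) • lcoeff ℝ α := by
    have := (basisMonomials ι ℝ).constr_basis ℝ
      (fun α => (α.prod fun _ k => (k.factorial : ℝ)) • lcoeff ℝ α) α
    simpa [apol] using this
  have h2 : monomial α a = a • monomial α (1 : ℝ) := by simp [smul_monomial]
  rw [h2, map_smul, h1]
  simp [lcoeff]

lemma apol_X_mul (i : ι) (f h : MvPolynomial ι ℝ) :
    apol (X i * f) h = apol f (pderiv i h) := by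
  classical
  induction f using MvPolynomial.induction_on' with
  | monomial s a =>
    have hX : X i * monomial s a = monomial (s + Finsupp.single i 1) a := by
      rw [X, monomial_mul, add_comm, one_mul]
    rw [hX, apol_monomial, apol_monomial, coeff_pderiv]
    have : (s + Finsupp.single i 1).prod (fun _ k => (k.factorial : ℝ)) =
        (s i + 1) * s.prod (fun _ k => (k.factorial : ℝ)) := by
      set t := insert i s.support with ht
      have hi : i ∈ t := Finset.mem_insert_self _ _
      have h1 : s.support ⊆ t := Finset.subset_insert _ _
      have h2 : (s + Finsupp.single i 1).support ⊆ t := by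
        intro x hx
        rcases Finset.mem_union.mp (Finsupp.support_add hx) with h | h
        · exact h1 h
        · rw [Finset.mem_singleton.mp (Finsupp.support_single_subset h)]; exact hi
      rw [Finsupp.prod_of_support_subset _ h2 _ (by simp),
        Finsupp.prod_of_support_subset _ h1 _ (by simp),
        ← Finset.mul_prod_erase _ _ hi, ← Finset.mul_prod_erase _ _ hi,
        Finset.prod_congr rfl fun j hj => by
          rw [Finsupp.add_apply, Finsupp.single_eq_of_ne (Finset.ne_of_mem_erase hj), add_zero]]
      simp [Nat.factorial_succ]; ring
    rw [this]; ring
  | add p q hp hq => simp only [mul_add, map_add, LinearMap.add_apply, hp, hq]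

lemma apol_sq (f : MvPolynomial ι ℝ) :
    apol f f = ∑ α ∈ f.support, (α.prod fun _ k => (k.factorial : ℝ)) * coeff α f ^ 2 := by
  have h : apol f f = apol (∑ α ∈ f.support, monomial α (coeff α f)) f := by rw [← f.as_sum]
  rw [h, map_sum, LinearMap.sum_apply]
  refine Finset.sum_congr rfl fun α _ => ?_
  rw [apol_monomial]
  ring

lemma apol_comm (f g : MvPolynomial ι ℝ) : apol f g = apol g f := by
  classical
  induction f using MvPolynomial.induction_on' with
  | monomial s a =>
    induction g using MvPolynomial.induction_on' with
    | monomial t b =>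
      rw [apol_monomial, apol_monomial, coeff_monomial, coeff_monomial]
      by_cases h : s = t
      · subst h; simp; ring
      · simp [h, Ne.symm h]
    | add p q hp hq => simp only [map_add, LinearMap.add_apply, hp, hq]
  | add p q hp hq => simp only [map_add, LinearMap.add_apply, hp, hq]

lemma factorial_prod_pos (α : ι →₀ ℕ) : 0 < α.prod fun _ k => (k.factorial : ℝ) :=
  Finset.prod_pos fun _ _ => Nat.cast_pos.mpr (Nat.factorial_pos _)

lemma apol_nonneg (f : MvPolynomial ι ℝ) : 0 ≤ apol f f := by
  rw [apol_sq]
  exact Finset.sum_nonneg fun α _ => mul_nonneg (factorial_prod_pos α).le (sq_nonneg _)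

lemma apol_pos {f : MvPolynomial ι ℝ} (hf : f ≠ 0) : 0 < apol f f := by
  rw [apol_sq]
  refine Finset.sum_pos (fun α hα => mul_pos (factorial_prod_pos α) ?_) (by simpa using hf)
  have := mem_support_iff.mp hα
  positivity

lemma apol_C_C (a b : ℝ) : apol (C a : MvPolynomial ι ℝ) (C b) = a * b := by
  rw [show (C a : MvPolynomial ι ℝ) = monomial 0 a from rfl, apol_monomial]; simp

lemma apol_cauchy_schwarz (f g : MvPolynomial ι ℝ) :
    apol f g ^ 2 ≤ apol f f * apol g g := by
  have := LinearMap.BilinForm.apply_mul_apply_le_of_forall_zero_le (B := apol) apol_nonneg f g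
  rwa [apol_comm g f, ← sq] at this

lemma apol_add_le (f g : MvPolynomial ι ℝ) :
    apol (f + g) (f + g) ≤ 2 * apol f f + 2 * apol g g := by
  have := apol_nonneg (f - g)
  simp only [map_add, map_sub, LinearMap.add_apply, LinearMap.sub_apply] at *
  linarith

lemma apol_sum_sq_mul (s : Finset ι) (f h : MvPolynomial ι ℝ) :
    apol ((∑ i ∈ s, X i ^ 2) * f) h = apol f (lap s h) := by
  rw [lap_apply, Finset.sum_mul, map_sum, LinearMap.sum_apply, map_sum]
  refine Finset.sum_congr rfl fun i _ => ?_
  rw [sq, mul_assoc, apol_X_mul, apol_X_mul]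

lemma eq_C_of_isHomogeneous_zero {f : MvPolynomial ι ℝ} (hf : f.IsHomogeneous 0) :
    ∃ c, f = C c := by
  rw [← totalDegree_zero_iff_isHomogeneous, totalDegree_eq_zero_iff_eq_C] at hf
  exact ⟨_, hf⟩

variable [Fintype ι]

lemma apol_euler {e : ℕ} {f : MvPolynomial ι ℝ} (hf : f.IsHomogeneous e) (h : MvPolynomial ι ℝ) :
    e * apol f h = ∑ i, apol (pderiv i f) (pderiv i h) := by
  have h1 : (e : ℝ) • f = ∑ i, X i * pderiv i f := by
    rw [hf.sum_X_mul_pderiv, Nat.cast_smul_eq_nsmul]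
  rw [← smul_eq_mul, ← LinearMap.smul_apply, ← map_smul, h1, map_sum, LinearMap.sum_apply]
  simp_rw [apol_X_mul]

lemma IsStein.apol_le {G : MvPolynomial ι ℝ →ₗ[ℝ] ℝ} (hG : IsStein G) (e : ℕ) :
    ∀ f : MvPolynomial ι ℝ, f.IsHomogeneous e → apol f f ≤ G (f * f) := by
  induction e with
  | zero =>
    intro f hf
    obtain ⟨c, rfl⟩ := eq_C_of_isHomogeneous_zero hf
    rw [apol_C_C, ← map_mul, C_eq_smul_one, map_smul, hG.one]; simp
  | succ e ih =>
    intro f hf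
    have h1 := apol_euler hf f
    have h2 := Finset.sum_le_sum fun i (_ : i ∈ Finset.univ) => ih (pderiv i f) hf.pderiv
    rw [← h1] at h2
    have he : (0 : ℝ) < ((e + 1 : ℕ) : ℝ) := by positivity
    exact le_of_mul_le_mul_left (h2.trans (hG.sum_pderiv_le hf)) he

/-- Submultiplicativity of the apolar norm up to the factor `2 ^ (a + b)`. -/
lemma apol_mul_le (N : ℕ) : ∀ (a b : ℕ) (g h : MvPolynomial ι ℝ), a + b = N →
    g.IsHomogeneous a → h.IsHomogeneous b →
    apol (g * h) (g * h) ≤ 2 ^ N * (apol g g * apol h h) := by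
  induction N with
  | zero =>
    intro a b g h hab hg hh
    obtain ⟨rfl, rfl⟩ : a = 0 ∧ b = 0 := by omega
    obtain ⟨c, rfl⟩ := eq_C_of_isHomogeneous_zero hg
    obtain ⟨d, rfl⟩ := eq_C_of_isHomogeneous_zero hh
    rw [← map_mul, apol_C_C, apol_C_C, apol_C_C]
    apply le_of_eq; ring
  | succ N ih =>
    intro a b g h hab hg hh
    have h1 := apol_euler (hg.mul hh) (g * h)
    have hL : ∀ i, apol (pderiv i g * h) (pderiv i g * h) ≤
        2 ^ N * (apol (pderiv i g) (pderiv i g) * apol h h) := by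
      intro i
      rcases Nat.eq_zero_or_pos a with rfl | ha
      · obtain ⟨c, rfl⟩ := eq_C_of_isHomogeneous_zero hg
        simp
      · exact ih (a - 1) b _ _ (by omega) hg.pderiv hh
    have hR : ∀ i, apol (g * pderiv i h) (g * pderiv i h) ≤
        2 ^ N * (apol g g * apol (pderiv i h) (pderiv i h)) := by
      intro i
      rcases Nat.eq_zero_or_pos b with rfl | hb
      · obtain ⟨c, rfl⟩ := eq_C_of_isHomogeneous_zero hh
        simp
      · exact ih a (b - 1) _ _ (by omega) hg hh.pderiv
    have h2 : ∑ i, apol (pderiv i (g * h)) (pderiv i (g * h)) ≤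
        ∑ i, (2 ^ (N + 1) * (apol (pderiv i g) (pderiv i g) * apol h h) +
          2 ^ (N + 1) * (apol g g * apol (pderiv i h) (pderiv i h))) := by
      refine Finset.sum_le_sum fun i _ => ?_
      rw [pderiv_mul]
      refine (apol_add_le _ _).trans ?_
      rw [pow_succ]
      linarith [hL i, hR i]
    rw [← h1, Finset.sum_add_distrib, ← Finset.mul_sum, ← Finset.mul_sum, ← Finset.sum_mul,
      ← Finset.mul_sum, ← apol_euler hg, ← apol_euler hh] at h2
    have he : (0 : ℝ) < ((a + b : ℕ) : ℝ) := by rw [hab]; positivity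
    refine le_of_mul_le_mul_left (h2.trans (le_of_eq ?_)) he
    push_cast; ring
end

section
open scoped Matrix

section
variable {n m : ℕ}

lemma biform_mul {a b a' b' : ℕ} {f g : MvPolynomial (Fin n ⊕ Fin m) ℝ}
    (hf : f ∈ Biform n m a b) (hg : g ∈ Biform n m a' b') :
    f * g ∈ Biform n m (a + a') (b + b') := IsWeightedHomogeneous.mul hf hg

lemma biform_mul_self {a b : ℕ} {f g : MvPolynomial (Fin n ⊕ Fin m) ℝ}
    (hf : f ∈ Biform n m a b) (hg : g ∈ Biform n m a b) :
    f * g ∈ Biform n m (2 * a) (2 * b) := by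
  rw [two_mul, two_mul]; exact biform_mul hf hg

lemma biform_add {a b : ℕ} {f g : MvPolynomial (Fin n ⊕ Fin m) ℝ}
    (hf : f ∈ Biform n m a b) (hg : g ∈ Biform n m a b) : f + g ∈ Biform n m a b :=
  (weightedHomogeneousSubmodule ℝ (bw n m) (a, b)).add_mem hf hg

lemma biform_smul {a b : ℕ} {f : MvPolynomial (Fin n ⊕ Fin m) ℝ} (c : ℝ)
    (hf : f ∈ Biform n m a b) : c • f ∈ Biform n m a b :=
  (weightedHomogeneousSubmodule ℝ (bw n m) (a, b)).smul_mem c hf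

lemma biform_sum {a b : ℕ} {s : Type*} (t : Finset s) {f : s → MvPolynomial (Fin n ⊕ Fin m) ℝ}
    (hf : ∀ i ∈ t, f i ∈ Biform n m a b) : ∑ i ∈ t, f i ∈ Biform n m a b :=
  (weightedHomogeneousSubmodule ℝ (bw n m) (a, b)).sum_mem hf

lemma biform_isHomogeneous {a b : ℕ} {f : MvPolynomial (Fin n ⊕ Fin m) ℝ}
    (hf : f ∈ Biform n m a b) : f.IsHomogeneous (a + b) := by
  intro d hd
  have h := hf hd
  rw [Finsupp.weight_apply, Finsupp.sum] at h ⊢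
  have h1 := congrArg Prod.fst h
  have h2 := congrArg Prod.snd h
  rw [Prod.fst_sum] at h1
  rw [Prod.snd_sum] at h2
  simp only at h1 h2
  rw [← h1, ← h2, ← Finset.sum_add_distrib]
  refine Finset.sum_congr rfl fun i _ => ?_
  rcases i with i | i <;> simp [bw]

lemma biform_fst {a b : ℕ} {f : MvPolynomial (Fin n ⊕ Fin m) ℝ}
    (hf : f ∈ Biform n m a b) : f.IsWeightedHomogeneous (fun i => (bw n m i).1) a := by
  intro d hd
  have h := congrArg Prod.fst (hf hd)
  rw [Finsupp.weight_apply, Finsupp.sum] at h ⊢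
  rw [Prod.fst_sum] at h
  exact h

lemma biform_snd {a b : ℕ} {f : MvPolynomial (Fin n ⊕ Fin m) ℝ}
    (hf : f ∈ Biform n m a b) : f.IsWeightedHomogeneous (fun i => (bw n m i).2) b := by
  intro d hd
  have h := congrArg Prod.snd (hf hd)
  rw [Finsupp.weight_apply, Finsupp.sum] at h ⊢
  rw [Prod.snd_sum] at h
  exact h

lemma biform_euler_inl {a b : ℕ} {f : MvPolynomial (Fin n ⊕ Fin m) ℝ}
    (hf : f ∈ Biform n m a b) : ∑ i, X (Sum.inl i) * pderiv (Sum.inl i) f = (a : ℝ) • f := by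
  have h := (biform_fst hf).sum_weight_X_mul_pderiv
  rw [Fintype.sum_sum_type] at h
  simpa [bw, Nat.cast_smul_eq_nsmul] using h

lemma biform_euler_inr {a b : ℕ} {f : MvPolynomial (Fin n ⊕ Fin m) ℝ}
    (hf : f ∈ Biform n m a b) : ∑ i, X (Sum.inr i) * pderiv (Sum.inr i) f = (b : ℝ) • f := by
  have h := (biform_snd hf).sum_weight_X_mul_pderiv
  rw [Fintype.sum_sum_type] at h
  simpa [bw, Nat.cast_smul_eq_nsmul] using h

lemma biform_pderiv_inl {a b : ℕ} {f : MvPolynomial (Fin n ⊕ Fin m) ℝ}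
    (hf : f ∈ Biform n m (a + 1) b) (i : Fin n) : pderiv (Sum.inl i) f ∈ Biform n m a b :=
  IsWeightedHomogeneous.pderiv hf (by simp [bw])

lemma biform_pderiv_inr {a b : ℕ} {f : MvPolynomial (Fin n ⊕ Fin m) ℝ}
    (hf : f ∈ Biform n m a (b + 1)) (i : Fin m) : pderiv (Sum.inr i) f ∈ Biform n m a b :=
  IsWeightedHomogeneous.pderiv hf (by simp [bw])

lemma biform_X_mul_inl {a b : ℕ} {f : MvPolynomial (Fin n ⊕ Fin m) ℝ}
    (hf : f ∈ Biform n m a b) (i : Fin n) : X (Sum.inl i) * f ∈ Biform n m (a + 1) b := by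
  have h := IsWeightedHomogeneous.mul (isWeightedHomogeneous_X ℝ (bw n m) (Sum.inl i)) hf
  rwa [show bw n m (Sum.inl i) + (a, b) = (a + 1, b) by simp [bw, add_comm]] at h

lemma biform_X_mul_inr {a b : ℕ} {f : MvPolynomial (Fin n ⊕ Fin m) ℝ}
    (hf : f ∈ Biform n m a b) (i : Fin m) : X (Sum.inr i) * f ∈ Biform n m a (b + 1) := by
  have h := IsWeightedHomogeneous.mul (isWeightedHomogeneous_X ℝ (bw n m) (Sum.inr i)) hf
  rwa [show bw n m (Sum.inr i) + (a, b) = (a, b + 1) by simp [bw, add_comm]] at h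

lemma one_mem_biform : (1 : MvPolynomial (Fin n ⊕ Fin m) ℝ) ∈ Biform n m 0 0 :=
  isWeightedHomogeneous_one ℝ (bw n m)

lemma biform_zero_zero {f : MvPolynomial (Fin n ⊕ Fin m) ℝ} (hf : f ∈ Biform n m 0 0) :
    f = (apol 1 f) • 1 := by
  obtain ⟨c, rfl⟩ := eq_C_of_isHomogeneous_zero (biform_isHomogeneous hf)
  rw [← C_1, apol_C_C, one_mul, C_1, ← C_eq_smul_one]

/-- Biforms of bidegree `(a, b)` resolve biforms of higher bidegree through differential
operators adjoint to multiplication for the apolar form. -/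
lemma exists_resolution (n m a b : ℕ) : ∃ (s : Type) (_ : Fintype s)
    (p : s → MvPolynomial (Fin n ⊕ Fin m) ℝ)
    (T : s → MvPolynomial (Fin n ⊕ Fin m) ℝ →ₗ[ℝ] MvPolynomial (Fin n ⊕ Fin m) ℝ),
    (∀ i, p i ∈ Biform n m a b) ∧ (∀ i h f, apol (p i * h) f = apol h (T i f)) ∧
    (∀ i a' b' f, f ∈ Biform n m (a + a') (b + b') → T i f ∈ Biform n m a' b') ∧
    ∀ a' b', ∃ c : ℝ, 0 < c ∧ ∀ f ∈ Biform n m (a + a') (b + b'), ∑ i, p i * T i f = c • f := by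
  induction a with
  | zero =>
    induction b with
    | zero =>
      refine ⟨Unit, inferInstance, fun _ => 1, fun _ => LinearMap.id, fun _ => one_mem_biform,
        by simp, by simp, fun a' b' => ⟨1, one_pos, by simp⟩⟩
    | succ b ih =>
      obtain ⟨s, _, p, T, h1, h2, h3, h4⟩ := ih
      refine ⟨Fin m × s, inferInstance, fun r => X (Sum.inr r.1) * p r.2,
        fun r => T r.2 ∘ₗ (pderiv (Sum.inr r.1)).toLinearMap,
        fun r => biform_X_mul_inr (h1 r.2) r.1, ?_, ?_, ?_⟩
      · intro r h f
        rw [mul_assoc, apol_X_mul, h2]; rfl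
      · intro r a' b' f hf
        rw [add_right_comm] at hf
        exact h3 _ _ _ _ (biform_pderiv_inr hf r.1)
      · intro a' b'
        obtain ⟨c, hc, h⟩ := h4 a' b'
        refine ⟨c * (b + b' + 1 : ℕ), by positivity, fun f hf => ?_⟩
        rw [add_right_comm] at hf
        rw [Fintype.sum_prod_type, mul_smul, ← biform_euler_inr hf, Finset.smul_sum]
        refine Finset.sum_congr rfl fun j _ => ?_
        simp only [LinearMap.comp_apply, mul_assoc, ← Finset.mul_sum]
        rw [← mul_smul_comm, ← h _ (biform_pderiv_inr hf j)]; rfl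
  | succ a ih =>
    obtain ⟨s, _, p, T, h1, h2, h3, h4⟩ := ih
    refine ⟨Fin n × s, inferInstance, fun r => X (Sum.inl r.1) * p r.2,
      fun r => T r.2 ∘ₗ (pderiv (Sum.inl r.1)).toLinearMap,
      fun r => biform_X_mul_inl (h1 r.2) r.1, ?_, ?_, ?_⟩
    · intro r h f
      rw [mul_assoc, apol_X_mul, h2]; rfl
    · intro r a' b' f hf
      rw [add_right_comm] at hf
      exact h3 _ _ _ _ (biform_pderiv_inl hf r.1)
    · intro a' b'
      obtain ⟨c, hc, h⟩ := h4 a' b'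
      refine ⟨c * (a + a' + 1 : ℕ), by positivity, fun f hf => ?_⟩
      rw [add_right_comm] at hf
      rw [Fintype.sum_prod_type, mul_smul, ← biform_euler_inl hf, Finset.smul_sum]
      refine Finset.sum_congr rfl fun j _ => ?_
      simp only [LinearMap.comp_apply, mul_assoc, ← Finset.mul_sum]
      rw [← mul_smul_comm, ← h _ (biform_pderiv_inl hf j)]; rfl

/-- A form that is nonnegative against squares in the apolar pairing is a sum of squares. -/
lemma mem_sqSet_of_apol_nonneg {a b : ℕ} {F : MvPolynomial (Fin n ⊕ Fin m) ℝ}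
    (hF : F ∈ Biform n m (2 * a) (2 * b))
    (h : ∀ g ∈ Biform n m a b, 0 ≤ apol (g * g) F) : F ∈ SqSet n m a b := by
  classical
  obtain ⟨s, _, p, T, h1, h2, h3, h4⟩ := exists_resolution n m a b
  obtain ⟨c, hc, e1⟩ := h4 a b
  obtain ⟨c', hc', e2⟩ := h4 0 0
  rw [two_mul, two_mul] at hF
  have hT : ∀ i, T i F ∈ Biform n m a b := fun i => h3 _ _ _ _ hF
  have hTT : ∀ i j, T j (T i F) = apol (p i * p j) F • 1 := by
    intro i j
    rw [biform_zero_zero (h3 j 0 0 _ (hT i)), ← h2, mul_one, h2 i]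
  have key : (c' * c) • F = ∑ i, ∑ j, apol (p i * p j) F • (p i * p j) := by
    rw [mul_smul, ← e1 F hF, Finset.smul_sum]
    refine Finset.sum_congr rfl fun i _ => ?_
    rw [← mul_smul_comm, ← e2 (T i F) (hT i), Finset.mul_sum]
    refine Finset.sum_congr rfl fun j _ => ?_
    rw [hTT, mul_smul_comm, mul_smul_comm, mul_one]
  set M : Matrix s s ℝ := Matrix.of fun i j => apol (p i * p j) F with hM
  have hpsd : M.PosSemidef := by
    refine Matrix.PosSemidef.of_dotProduct_mulVec_nonneg ?_ ?_
    · ext i j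
      simp [hM, mul_comm]
    · intro v
      have := h (∑ i, v i • p i) (biform_sum _ fun i _ => biform_smul _ (h1 i))
      rw [Finset.sum_mul_sum] at this
      simp only [map_sum, LinearMap.sum_apply, smul_mul_smul_comm, map_smul,
        LinearMap.smul_apply, smul_eq_mul] at this
      simp only [dotProduct, Matrix.mulVec, hM, Matrix.of_apply, Finset.mul_sum]
      refine this.trans (le_of_eq ?_)
      refine Finset.sum_congr rfl fun i _ => Finset.sum_congr rfl fun j _ => ?_
      simp; ring
  obtain ⟨B, hB⟩ : ∃ B : Matrix s s ℝ, M = Bᴴ * B := by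
    open scoped MatrixOrder Matrix.Norms.L2Operator in
    exact CStarAlgebra.nonneg_iff_eq_star_mul_self.mp hpsd.nonneg
  have hF2 : F = ∑ k, (√((c' * c)⁻¹) • ∑ i, B k i • p i) ^ 2 := by
    have h5 : ∑ k, (∑ i, B k i • p i) ^ 2 = (c' * c) • F := by
      rw [key]
      have : ∀ i j, apol (p i * p j) F = ∑ k, B k i * B k j := by
        intro i j
        have := congrFun (congrFun hB i) j
        simpa [hM, Matrix.mul_apply] using this
      simp_rw [this, Finset.sum_smul, sq, Finset.sum_mul_sum, smul_mul_smul_comm]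
      rw [Finset.sum_comm]
      refine Finset.sum_congr rfl fun i _ => Finset.sum_comm
    simp_rw [smul_pow]
    rw [← Finset.smul_sum, h5, Real.sq_sqrt (by positivity), smul_smul,
      inv_mul_cancel₀ (by positivity), one_smul]
  refine ⟨Fintype.card s, fun r => √((c' * c)⁻¹) • ∑ i, B ((Fintype.equivFin s).symm r) i • p i,
    fun r => biform_smul _ (biform_sum _ fun i _ => biform_smul _ (h1 i)), ?_⟩
  rw [hF2]
  exact (Equiv.sum_comp (Fintype.equivFin s).symm
    (fun k => (√((c' * c)⁻¹) • ∑ i, B k i • p i) ^ 2)).symm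

end

end

/-- Substituting a path of matrices through the identity and differentiating a linear
functional yields the functional of the corresponding linear vector field. -/
lemma hasDerivAt_bind₁ {ι : Type} [Fintype ι] [DecidableEq ι] {r : ℝ → Matrix ι ι ℝ}
    {A : Matrix ι ι ℝ} (h0 : r 0 = 1) (hr : ∀ k l, HasDerivAt (fun t => r t k l) (A k l) 0)
    (f : MvPolynomial ι ℝ) : ∀ L : MvPolynomial ι ℝ →ₗ[ℝ] ℝ,
    HasDerivAt (fun t => L (bind₁ (fun k => ∑ l, r t k l • X l) f))
      (L (∑ k, ∑ l, A k l • (X l * pderiv k f))) 0 := by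
  induction f using MvPolynomial.induction_on with
  | C a => intro L; simpa using hasDerivAt_const _ _
  | add p q hp hq =>
    intro L
    simp only [map_add, mul_add, smul_add, Finset.sum_add_distrib]
    exact (hp L).fun_add (hq L)
  | mul_X p i hp =>
    intro L
    have h1 : ∀ l, HasDerivAt (fun t => r t i l * L (bind₁ (fun k => ∑ l, r t k l • X l) p * X l))
        (A i l * L (p * X l) + r 0 i l * L ((∑ k, ∑ l, A k l • (X l * pderiv k p)) * X l)) 0 := by
      intro l
      have h2 := (hr i l).fun_mul (hp (L ∘ₗ LinearMap.mulRight ℝ (X l)))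
      have h3 : bind₁ (fun k => ∑ l, r 0 k l • X l) p = p := by
        have : (fun k => ∑ l, r 0 k l • X l) = (X : ι → MvPolynomial ι ℝ) := by
          ext1 k; simp [h0, Matrix.one_apply]
        rw [this, bind₁_X_left]; rfl
      refine h2.congr_deriv ?_
      rw [h3]
      rfl
    have h2 := HasDerivAt.fun_sum fun l (_ : l ∈ Finset.univ) => h1 l
    have e1 : (fun t => L (bind₁ (fun k => ∑ l, r t k l • X l) (p * X i))) =
        fun t => ∑ l, r t i l * L (bind₁ (fun k => ∑ l, r t k l • X l) p * X l) := by
      ext t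
      simp [Finset.mul_sum]
    rw [e1]
    refine h2.congr_deriv ?_
    rw [Finset.sum_add_distrib]
    have e2 : ∑ l, r 0 i l * L ((∑ k, ∑ l, A k l • (X l * pderiv k p)) * X l) =
        L ((∑ k, ∑ l, A k l • (X l * pderiv k p)) * X i) := by
      simp [h0, Matrix.one_apply]
    have e3 : ∑ k, ∑ l, A k l • (X l * pderiv k (p * X i)) =
        ∑ l, A i l • (p * X l) + (∑ k, ∑ l, A k l • (X l * pderiv k p)) * X i := by
      have : ∀ k l, A k l • (X l * pderiv k (p * X i)) =
          (Pi.single (M := fun _ => MvPolynomial ι ℝ) k (A k l • (p * X l)) i) +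
            A k l • (X l * pderiv k p) * X i := by
        intro k l
        rw [pderiv_mul, pderiv_X, mul_add, smul_add, add_comm]
        by_cases h : i = k
        · subst h
          simp only [Pi.single_eq_same, mul_one, smul_mul_assoc]
          rw [mul_comm p, mul_assoc]
        · simp only [Pi.single_eq_of_ne h, mul_zero, smul_zero, smul_mul_assoc, mul_assoc]
      simp_rw [this, Finset.sum_add_distrib, Finset.sum_mul]
      congr 1
      rw [Finset.sum_comm]
      simp [Pi.single_apply]
    rw [e2, e3, map_add]
    simp [map_sum]

/-- The rotation by the angle `t` in the coordinate plane spanned by `i` and `j`. -/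
def planeRotation {n : ℕ} (i j : Fin n) (t : ℝ) : Matrix (Fin n) (Fin n) ℝ :=
  1 + (Real.cos t - 1) • (Matrix.single i i 1 + Matrix.single j j 1) +
    Real.sin t • (Matrix.single i j 1 - Matrix.single j i 1)

lemma planeRotation_mul_transpose {n : ℕ} {i j : Fin n} (hij : i ≠ j) (t : ℝ) :
    planeRotation i j t * (planeRotation i j t).transpose = 1 := by
  set E : Matrix (Fin n) (Fin n) ℝ := Matrix.single i i 1 + Matrix.single j j 1 with hE
  set J : Matrix (Fin n) (Fin n) ℝ := Matrix.single i j 1 - Matrix.single j i 1 with hJ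
  have h1 : E * E = E := by
    simp [hE, mul_add, add_mul, Matrix.single_mul_single_of_ne, hij, hij.symm]
  have h2 : E * J = J := by
    simp [hE, hJ, add_mul, mul_sub, Matrix.single_mul_single_of_ne, hij, hij.symm]
  have h3 : J * E = J := by
    simp [hE, hJ, mul_add, sub_mul, Matrix.single_mul_single_of_ne, hij, hij.symm]
    abel
  have h4 : J * J = -E := by
    simp [hE, hJ, mul_sub, sub_mul, Matrix.single_mul_single_of_ne, hij, hij.symm]
    abel
  have h5 : E.transpose = E := by simp [hE]
  have h6 : J.transpose = -J := by simp [hJ]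
  have h7 := Real.sin_sq_add_cos_sq t
  have e : (Real.cos t - 1) • E + ((Real.cos t - 1) • E + (Real.cos t - 1) ^ 2 • E) +
      Real.sin t ^ 2 • E = (0 : Matrix (Fin n) (Fin n) ℝ) := by
    rw [← add_smul, ← add_smul, ← add_smul, show Real.cos t - 1 + (Real.cos t - 1 +
      (Real.cos t - 1) ^ 2) + Real.sin t ^ 2 = 0 by linarith, zero_smul]
  rw [planeRotation, ← hE, ← hJ]
  simp only [Matrix.transpose_add, Matrix.transpose_smul, h5, h6, Matrix.transpose_one, mul_add,
    add_mul, mul_one, one_mul, Matrix.smul_mul, Matrix.mul_smul, h1, h2, h3, h4, mul_neg, smul_neg,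
    smul_smul]
  rw [← sub_eq_zero, ← e]
  module

lemma hasDerivAt_planeRotation {n : ℕ} (i j k l : Fin n) :
    HasDerivAt (fun t => planeRotation i j t k l)
      ((Matrix.single i j 1 - Matrix.single j i 1 : Matrix (Fin n) (Fin n) ℝ) k l) 0 := by
  have h := ((((Real.hasDerivAt_cos 0).sub_const 1).mul_const
      ((Matrix.single i i 1 + Matrix.single j j 1 : Matrix (Fin n) (Fin n) ℝ) k l)).const_add
      ((1 : Matrix (Fin n) (Fin n) ℝ) k l)).add ((Real.hasDerivAt_sin 0).mul_const
      ((Matrix.single i j 1 - Matrix.single j i 1 : Matrix (Fin n) (Fin n) ℝ) k l))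
  refine h.congr_deriv ?_
  simp

lemma planeRotation_zero {n : ℕ} (i j : Fin n) : planeRotation i j 0 = 1 := by
  simp [planeRotation]

/-- Algebraic properties of the average over a product of two unit spheres. -/
structure IsBisphereAverage (n m : ℕ) (I : MvPolynomial (Fin n ⊕ Fin m) ℝ →ₗ[ℝ] ℝ) : Prop where
  one : I 1 = 1
  nonneg : ∀ f, 0 ≤ I (f * f)
  sphere_inl : ∀ f, I ((∑ i, X (Sum.inl i) ^ 2) * f) = I f
  sphere_inr : ∀ f, I ((∑ i, X (Sum.inr i) ^ 2) * f) = I f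
  rot_inl : ∀ i j f, I (X (Sum.inl i) * pderiv (Sum.inl j) f) =
    I (X (Sum.inl j) * pderiv (Sum.inl i) f)
  rot_inr : ∀ i j f, I (X (Sum.inr i) * pderiv (Sum.inr j) f) =
    I (X (Sum.inr j) * pderiv (Sum.inr i) f)

lemma isCompact_unitSphere (n : ℕ) : IsCompact (unitSphere n) := by
  refine Metric.isCompact_of_isClosed_isBounded ?_ ?_
  · exact isClosed_eq (by fun_prop) continuous_const
  · refine (Metric.isBounded_closedBall (x := (0 : Fin n → ℝ)) (r := 1)).subset fun x hx => ?_
    rw [mem_closedBall_zero_iff, pi_norm_le_iff_of_nonneg zero_le_one]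
    intro i
    have h : x i ^ 2 ≤ ∑ j, x j ^ 2 :=
      Finset.single_le_sum (f := fun j => x j ^ 2) (fun j _ => sq_nonneg _) (Finset.mem_univ i)
    rw [show ∑ j, x j ^ 2 = 1 from hx] at h
    rw [Real.norm_eq_abs]
    exact (sq_le_one_iff_abs_le_one _).mp h

section
variable {n m : ℕ} {σ₁ : Measure (Fin n → ℝ)} {σ₂ : Measure (Fin m → ℝ)}

lemma continuous_beval (f : MvPolynomial (Fin n ⊕ Fin m) ℝ) :
    Continuous fun z : (Fin n → ℝ) × (Fin m → ℝ) => beval f z.1 z.2 := by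
  refine (continuous_eval f).comp (continuous_pi fun i => ?_)
  rcases i with i | i <;> simp <;> fun_prop

lemma ae_mem_unitSphere (hσ₁ : IsSphereMeasure n σ₁) (hσ₂ : IsSphereMeasure m σ₂) :
    ∀ᵐ z ∂(σ₁.prod σ₂), z ∈ unitSphere n ×ˢ unitSphere m := by
  have := hσ₁.prob
  have := hσ₂.prob
  have h1 : ∀ᵐ x ∂σ₁, x ∈ unitSphere n := hσ₁.onSphere
  have h2 : ∀ᵐ y ∂σ₂, y ∈ unitSphere m := hσ₂.onSphere
  filter_upwards [Measure.quasiMeasurePreserving_fst.ae h1,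
    Measure.quasiMeasurePreserving_snd.ae h2] with z hz1 hz2 using ⟨hz1, hz2⟩

lemma integrable_beval (hσ₁ : IsSphereMeasure n σ₁) (hσ₂ : IsSphereMeasure m σ₂)
    (f : MvPolynomial (Fin n ⊕ Fin m) ℝ) :
    Integrable (fun z : (Fin n → ℝ) × (Fin m → ℝ) => beval f z.1 z.2) (σ₁.prod σ₂) := by
  have := hσ₁.prob
  have := hσ₂.prob
  obtain ⟨c, hc⟩ := ((isCompact_unitSphere n).prod (isCompact_unitSphere m)).exists_bound_of_continuousOn
    (continuous_beval f).continuousOn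
  refine Integrable.of_bound (continuous_beval f).aestronglyMeasurable c ?_
  filter_upwards [ae_mem_unitSphere hσ₁ hσ₂] with z hz using hc z hz

/-- The average over the product of the two spheres as a linear functional. -/
def sphereAverage (hσ₁ : IsSphereMeasure n σ₁) (hσ₂ : IsSphereMeasure m σ₂) :
    MvPolynomial (Fin n ⊕ Fin m) ℝ →ₗ[ℝ] ℝ where
  toFun f := ∫ z, beval f z.1 z.2 ∂(σ₁.prod σ₂)
  map_add' f g := by
    rw [← integral_add (integrable_beval hσ₁ hσ₂ f) (integrable_beval hσ₁ hσ₂ g)]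
    simp [beval]
  map_smul' c f := by
    simp [beval, integral_const_mul]

lemma sphereAverage_apply (hσ₁ : IsSphereMeasure n σ₁) (hσ₂ : IsSphereMeasure m σ₂)
    (f : MvPolynomial (Fin n ⊕ Fin m) ℝ) :
    sphereAverage hσ₁ hσ₂ f = ∫ z, beval f z.1 z.2 ∂(σ₁.prod σ₂) := rfl

lemma bavg_eq_sphereAverage (hσ₁ : IsSphereMeasure n σ₁) (hσ₂ : IsSphereMeasure m σ₂)
    (f : MvPolynomial (Fin n ⊕ Fin m) ℝ) : bavg σ₁ σ₂ f = sphereAverage hσ₁ hσ₂ f := by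
  have := hσ₁.prob
  have := hσ₂.prob
  rw [sphereAverage_apply, integral_prod _ (integrable_beval hσ₁ hσ₂ f)]
  rfl

lemma bip_eq_sphereAverage (hσ₁ : IsSphereMeasure n σ₁) (hσ₂ : IsSphereMeasure m σ₂)
    (f g : MvPolynomial (Fin n ⊕ Fin m) ℝ) : bip σ₁ σ₂ f g = sphereAverage hσ₁ hσ₂ (f * g) := by
  rw [← bavg_eq_sphereAverage hσ₁ hσ₂]
  simp [bip, bavg, beval]

lemma sphereAverage_comp (hσ₁ : IsSphereMeasure n σ₁) (hσ₂ : IsSphereMeasure m σ₂)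
    {Q₁ : Matrix (Fin n) (Fin n) ℝ} {Q₂ : Matrix (Fin m) (Fin m) ℝ}
    (h₁ : Q₁ * Q₁.transpose = 1) (h₂ : Q₂ * Q₂.transpose = 1)
    (f : MvPolynomial (Fin n ⊕ Fin m) ℝ) :
    sphereAverage hσ₁ hσ₂
      (bind₁ (fun k => ∑ l, Matrix.fromBlocks Q₁ 0 0 Q₂ k l • X l) f) = sphereAverage hσ₁ hσ₂ f := by
  have := hσ₁.prob
  have := hσ₂.prob
  have c1 : Continuous Q₁.mulVec := Continuous.matrix_mulVec continuous_const continuous_id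
  have c2 : Continuous Q₂.mulVec := Continuous.matrix_mulVec continuous_const continuous_id
  have m1 : MeasurePreserving Q₁.mulVec σ₁ σ₁ := ⟨c1.measurable, hσ₁.invariant _ h₁⟩
  have m2 : MeasurePreserving Q₂.mulVec σ₂ σ₂ := ⟨c2.measurable, hσ₂.invariant _ h₂⟩
  have hp := m1.prod m2
  rw [sphereAverage_apply, sphereAverage_apply]
  conv_rhs => rw [← hp.map_eq]
  rw [integral_map hp.measurable.aemeasurable (continuous_beval f).aestronglyMeasurable]
  refine integral_congr_ae (ae_of_all _ fun z => ?_)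
  simp only [beval, Prod.map]
  rw [← coe_aeval_eq_eval, ← coe_aeval_eq_eval, RingHom.coe_coe, RingHom.coe_coe, aeval_bind₁]
  congr 2
  ext1 k
  rcases k with k | k <;> simp [Matrix.mulVec, dotProduct]

lemma isBisphereAverage_sphereAverage (hσ₁ : IsSphereMeasure n σ₁) (hσ₂ : IsSphereMeasure m σ₂) :
    IsBisphereAverage n m (sphereAverage hσ₁ hσ₂) := by
  have := hσ₁.prob
  have := hσ₂.prob
  refine ⟨?_, ?_, ?_, ?_, ?_, ?_⟩
  · simp [sphereAverage_apply, beval]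
  · intro f
    exact integral_nonneg fun z => by simpa [beval] using mul_self_nonneg _
  · intro f
    refine integral_congr_ae ?_
    filter_upwards [ae_mem_unitSphere hσ₁ hσ₂] with z hz
    have h : ∑ i, z.1 i ^ 2 = 1 := hz.1
    simp [beval, h]
  · intro f
    refine integral_congr_ae ?_
    filter_upwards [ae_mem_unitSphere hσ₁ hσ₂] with z hz
    have h : ∑ i, z.2 i ^ 2 = 1 := hz.2
    simp [beval, h]
  · intro i j f
    rcases eq_or_ne i j with rfl | hij
    · rfl
    have h := hasDerivAt_bind₁ (r := fun t => Matrix.fromBlocks (planeRotation i j t) 0 0 1)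
      (A := Matrix.fromBlocks (Matrix.single i j 1 - Matrix.single j i 1) 0 0 0)
      (by simp [planeRotation_zero]) (by
        rintro (k | k) (l | l)
        · exact hasDerivAt_planeRotation i j k l
        · simpa using hasDerivAt_const _ _
        · simpa using hasDerivAt_const _ _
        · simpa using hasDerivAt_const _ _) f (sphereAverage hσ₁ hσ₂)
    simp_rw [sphereAverage_comp hσ₁ hσ₂ (planeRotation_mul_transpose hij _)
      (show (1 : Matrix (Fin m) (Fin m) ℝ) * Matrix.transpose 1 = 1 by simp)] at h
    have h2 := h.unique (hasDerivAt_const _ _)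
    simp [sub_smul, Finset.sum_sub_distrib, Matrix.single_apply, sub_eq_zero, ite_and] at h2
    exact h2.symm
  · intro i j f
    rcases eq_or_ne i j with rfl | hij
    · rfl
    have h := hasDerivAt_bind₁ (r := fun t => Matrix.fromBlocks 1 0 0 (planeRotation i j t))
      (A := Matrix.fromBlocks 0 0 0 (Matrix.single i j 1 - Matrix.single j i 1))
      (by simp [planeRotation_zero]) (by
        rintro (k | k) (l | l)
        · simpa using hasDerivAt_const _ _
        · simpa using hasDerivAt_const _ _
        · simpa using hasDerivAt_const _ _
        · exact hasDerivAt_planeRotation i j k l) f (sphereAverage hσ₁ hσ₂)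
    simp_rw [sphereAverage_comp hσ₁ hσ₂
      (show (1 : Matrix (Fin n) (Fin n) ℝ) * Matrix.transpose 1 = 1 by simp)
      (planeRotation_mul_transpose hij _)] at h
    have h2 := h.unique (hasDerivAt_const _ _)
    simp [sub_smul, Finset.sum_sub_distrib, Matrix.single_apply, sub_eq_zero, ite_and] at h2
    exact h2.symm
end

/-- The Gaussian moment `N (N + 2) ⋯ (N + 2 (k - 1))` of `|x| ^ (2 k)` in `ℝ ^ N`. -/
def gaussMoment (N k : ℕ) : ℝ := ∏ j ∈ Finset.range k, ((N : ℝ) + 2 * j)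

lemma gaussMoment_zero (N : ℕ) : gaussMoment N 0 = 1 := by simp [gaussMoment]

lemma gaussMoment_succ (N k : ℕ) : gaussMoment N (k + 1) = gaussMoment N k * (N + 2 * k) := by
  simp [gaussMoment, Finset.prod_range_succ]

lemma gaussMoment_pos {N : ℕ} (hN : 0 < N) (k : ℕ) : 0 < gaussMoment N k :=
  Finset.prod_pos fun _ _ => by positivity

lemma gaussMoment_sq_le (N k : ℕ) : gaussMoment N k ^ 2 ≤ gaussMoment N (2 * k) := by
  rw [sq, two_mul, gaussMoment, gaussMoment, Finset.prod_range_add]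
  refine mul_le_mul_of_nonneg_left (Finset.prod_le_prod (fun _ _ => by positivity) fun i _ => ?_)
    (Finset.prod_nonneg fun _ _ => by positivity)
  push_cast
  have : (0 : ℝ) ≤ k := by positivity
  linarith

lemma gaussMoment_le (N k : ℕ) : gaussMoment N k ≤ ((N : ℝ) + 2 * k) ^ k := by
  have : ((N : ℝ) + 2 * k) ^ k = ∏ _j ∈ Finset.range k, ((N : ℝ) + 2 * k) := by simp
  rw [this]
  refine Finset.prod_le_prod (fun _ _ => by positivity) fun i hi => ?_
  have : (i : ℝ) ≤ k := by exact_mod_cast (Finset.mem_range.mp hi).le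
  linarith

section
variable {n m : ℕ} {I : MvPolynomial (Fin n ⊕ Fin m) ℝ →ₗ[ℝ] ℝ}

/-- The Laplacian in the first group of variables. -/
abbrev lapInl : MvPolynomial (Fin n ⊕ Fin m) ℝ →ₗ[ℝ] MvPolynomial (Fin n ⊕ Fin m) ℝ :=
  lap (Finset.univ.map Function.Embedding.inl)

/-- The Laplacian in the second group of variables. -/
abbrev lapInr : MvPolynomial (Fin n ⊕ Fin m) ℝ →ₗ[ℝ] MvPolynomial (Fin n ⊕ Fin m) ℝ :=
  lap (Finset.univ.map Function.Embedding.inr)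

lemma lapInl_apply (f : MvPolynomial (Fin n ⊕ Fin m) ℝ) :
    lapInl f = ∑ i, pderiv (Sum.inl i) (pderiv (Sum.inl i) f) := by
  rw [lapInl, lap_apply, Finset.sum_map]; rfl

lemma lapInr_apply (f : MvPolynomial (Fin n ⊕ Fin m) ℝ) :
    lapInr f = ∑ i, pderiv (Sum.inr i) (pderiv (Sum.inr i) f) := by
  rw [lapInr, lap_apply, Finset.sum_map]; rfl

lemma IsBisphereAverage.X_inl_mul (hI : IsBisphereAverage n m I) {a b : ℕ}
    {f : MvPolynomial (Fin n ⊕ Fin m) ℝ} (hf : f ∈ Biform n m a b) (i : Fin n) :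
    I (pderiv (Sum.inl i) f) = ((n : ℝ) + a - 1) * I (X (Sum.inl i) * f) := by
  have h1 : ∑ j, X (Sum.inl i) * pderiv (Sum.inl j) (X (Sum.inl j) * f) =
      ((n : ℝ) + a) • (X (Sum.inl i) * f) := by
    rw [← Finset.mul_sum, ← mul_smul_comm, add_smul, ← biform_euler_inl hf]
    congr 1
    simp [Finset.sum_add_distrib, Nat.cast_smul_eq_nsmul, add_comm]
  have h2 : ∑ j, X (Sum.inl j) * pderiv (Sum.inl i) (X (Sum.inl j) * f) =
      X (Sum.inl i) * f + (∑ j, X (Sum.inl j) ^ 2) * pderiv (Sum.inl i) f := by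
    rw [Finset.sum_mul]
    simp only [pderiv_mul, pderiv_X, mul_add, Finset.sum_add_distrib]
    congr 1
    · simp [Pi.single_apply]
    · exact Finset.sum_congr rfl fun j _ => by ring
  have h3 := congrArg I h1
  have h4 := congrArg I h2
  rw [map_sum] at h3 h4
  simp_rw [hI.rot_inl i] at h3
  rw [h4, map_add, hI.sphere_inl, map_smul, smul_eq_mul] at h3
  linarith

lemma IsBisphereAverage.X_inr_mul (hI : IsBisphereAverage n m I) {a b : ℕ}
    {f : MvPolynomial (Fin n ⊕ Fin m) ℝ} (hf : f ∈ Biform n m a b) (i : Fin m) :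
    I (pderiv (Sum.inr i) f) = ((m : ℝ) + b - 1) * I (X (Sum.inr i) * f) := by
  have h1 : ∑ j, X (Sum.inr i) * pderiv (Sum.inr j) (X (Sum.inr j) * f) =
      ((m : ℝ) + b) • (X (Sum.inr i) * f) := by
    rw [← Finset.mul_sum, ← mul_smul_comm, add_smul, ← biform_euler_inr hf]
    congr 1
    simp [Finset.sum_add_distrib, Nat.cast_smul_eq_nsmul, add_comm]
  have h2 : ∑ j, X (Sum.inr j) * pderiv (Sum.inr i) (X (Sum.inr j) * f) =
      X (Sum.inr i) * f + (∑ j, X (Sum.inr j) ^ 2) * pderiv (Sum.inr i) f := by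
    rw [Finset.sum_mul]
    simp only [pderiv_mul, pderiv_X, mul_add, Finset.sum_add_distrib]
    congr 1
    · simp [Pi.single_apply]
    · exact Finset.sum_congr rfl fun j _ => by ring
  have h3 := congrArg I h1
  have h4 := congrArg I h2
  rw [map_sum] at h3 h4
  simp_rw [hI.rot_inr i] at h3
  rw [h4, map_add, hI.sphere_inr, map_smul, smul_eq_mul] at h3
  linarith

lemma IsBisphereAverage.lapInl (hI : IsBisphereAverage n m I) {a b : ℕ}
    {f : MvPolynomial (Fin n ⊕ Fin m) ℝ} (hf : f ∈ Biform n m (2 * (a + 1)) b) :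
    I (lapInl f) = ((n : ℝ) + 2 * a) * ((2 * (a + 1) : ℕ) * I f) := by
  have hf' : f ∈ Biform n m ((2 * a + 1) + 1) b := hf
  rw [← smul_eq_mul ((2 * (a + 1) : ℕ) : ℝ), ← map_smul, ← biform_euler_inl hf, lapInl_apply,
    map_sum, map_sum, Finset.mul_sum]
  refine Finset.sum_congr rfl fun i _ => ?_
  rw [hI.X_inl_mul (biform_pderiv_inl hf' i)]
  push_cast; ring

lemma IsBisphereAverage.lapInr (hI : IsBisphereAverage n m I) {a b : ℕ}
    {f : MvPolynomial (Fin n ⊕ Fin m) ℝ} (hf : f ∈ Biform n m a (2 * (b + 1))) :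
    I (lapInr f) = ((m : ℝ) + 2 * b) * ((2 * (b + 1) : ℕ) * I f) := by
  have hf' : f ∈ Biform n m a ((2 * b + 1) + 1) := hf
  rw [← smul_eq_mul ((2 * (b + 1) : ℕ) : ℝ), ← map_smul, ← biform_euler_inr hf, lapInr_apply,
    map_sum, map_sum, Finset.mul_sum]
  refine Finset.sum_congr rfl fun i _ => ?_
  rw [hI.X_inr_mul (biform_pderiv_inr hf' i)]
  push_cast; ring

lemma biform_lapInl {a b : ℕ} {f : MvPolynomial (Fin n ⊕ Fin m) ℝ}
    (hf : f ∈ Biform n m (2 * (a + 1)) b) : lapInl f ∈ Biform n m (2 * a) b := by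
  have hf' : f ∈ Biform n m ((2 * a + 1) + 1) b := hf
  rw [lapInl_apply]
  exact biform_sum _ fun i _ => biform_pderiv_inl (biform_pderiv_inl hf' i) i

lemma biform_lapInr {a b : ℕ} {f : MvPolynomial (Fin n ⊕ Fin m) ℝ}
    (hf : f ∈ Biform n m a (2 * (b + 1))) : lapInr f ∈ Biform n m a (2 * b) := by
  have hf' : f ∈ Biform n m a ((2 * b + 1) + 1) := hf
  rw [lapInr_apply]
  exact biform_sum _ fun i _ => biform_pderiv_inr (biform_pderiv_inr hf' i) i

variable {G : MvPolynomial (Fin n ⊕ Fin m) ℝ →ₗ[ℝ] ℝ}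

/-- The Gaussian average of a biform is a multiple of its spherical average. -/
lemma IsStein.eq_bisphereAverage (hG : IsStein G) (hI : IsBisphereAverage n m I) (a : ℕ) :
    ∀ (b : ℕ) (f : MvPolynomial (Fin n ⊕ Fin m) ℝ), f ∈ Biform n m (2 * a) (2 * b) →
      G f = gaussMoment n a * gaussMoment m b * I f := by
  induction a with
  | zero =>
    intro b
    induction b with
    | zero =>
      intro f hf
      rw [biform_zero_zero hf, map_smul, map_smul, hG.one, hI.one]
      simp [gaussMoment_zero]
    | succ b ih =>
      intro f hf
      have h1 : ((2 * (b + 1) : ℕ) : ℝ) * G f = G (lapInr f) := by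
        rw [← smul_eq_mul, ← map_smul, ← biform_euler_inr hf, lapInr_apply, map_sum, map_sum]
        exact Finset.sum_congr rfl fun i _ => hG.stein _ _
      rw [ih _ (biform_lapInr hf), hI.lapInr hf] at h1
      have h2 : ((2 * (b + 1) : ℕ) : ℝ) ≠ 0 := by positivity
      apply mul_left_cancel₀ h2
      rw [h1, gaussMoment_succ m b]
      ring
  | succ a ih =>
    intro b f hf
    have h1 : ((2 * (a + 1) : ℕ) : ℝ) * G f = G (lapInl f) := by
      rw [← smul_eq_mul, ← map_smul, ← biform_euler_inl hf, lapInl_apply, map_sum, map_sum]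
      exact Finset.sum_congr rfl fun i _ => hG.stein _ _
    rw [ih _ _ (biform_lapInl hf), hI.lapInl hf] at h1
    have h2 : ((2 * (a + 1) : ℕ) : ℝ) ≠ 0 := by positivity
    apply mul_left_cancel₀ h2
    rw [h1, gaussMoment_succ n a]
    ring

/-- The apolar pairing with the biform `q` is a multiple of the spherical average. -/
lemma apol_qpoly (hI : IsBisphereAverage n m I) (a : ℕ) :
    ∀ (b : ℕ) (f : MvPolynomial (Fin n ⊕ Fin m) ℝ), f ∈ Biform n m (2 * a) (2 * b) →
      apol (qpoly n m a b) f =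
        2 ^ (a + b) * (a.factorial * b.factorial) * (gaussMoment n a * gaussMoment m b) * I f := by
  induction a with
  | zero =>
    intro b
    induction b with
    | zero =>
      intro f hf
      conv_rhs => rw [biform_zero_zero hf]
      rw [map_smul, hI.one]
      simp [gaussMoment_zero, qpoly]
    | succ b ih =>
      intro f hf
      have h1 : qpoly n m 0 (b + 1) =
          (∑ i ∈ Finset.univ.map Function.Embedding.inr, X i ^ 2) * qpoly n m 0 b := by
        rw [Finset.sum_map, qpoly, qpoly, pow_succ']
        simp
      rw [h1, apol_sum_sq_mul, ih _ (biform_lapInr hf), hI.lapInr hf, gaussMoment_succ m b,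
        Nat.factorial_succ]
      push_cast; ring
  | succ a ih =>
    intro b f hf
    have h1 : qpoly n m (a + 1) b =
        (∑ i ∈ Finset.univ.map Function.Embedding.inl, X i ^ 2) * qpoly n m a b := by
      rw [Finset.sum_map, qpoly, qpoly, pow_succ', mul_assoc]
      rfl
    rw [h1, apol_sum_sq_mul, ih _ _ (biform_lapInl hf), hI.lapInl hf, gaussMoment_succ n a,
      Nat.factorial_succ]
    push_cast; ring

lemma IsBisphereAverage.qpoly_mul (hI : IsBisphereAverage n m I) (a b : ℕ)
    (f : MvPolynomial (Fin n ⊕ Fin m) ℝ) : I (qpoly n m a b * f) = I f := by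
  induction a generalizing b with
  | zero =>
    induction b with
    | zero => simp [qpoly]
    | succ b ih =>
      rw [← ih, qpoly, pow_succ', pow_zero, one_mul, mul_assoc, hI.sphere_inr, qpoly, pow_zero, one_mul]
  | succ a ih => rw [← ih b, qpoly, pow_succ', mul_assoc, mul_assoc, hI.sphere_inl, qpoly, mul_assoc]

lemma qpoly_mem_biform (a b : ℕ) : qpoly n m a b ∈ Biform n m (2 * a) (2 * b) := by
  have h1 : ∀ a, (∑ i : Fin n, X (Sum.inl i) ^ 2 : MvPolynomial (Fin n ⊕ Fin m) ℝ) ^ a ∈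
      Biform n m (2 * a) 0 := by
    intro a
    have h := IsWeightedHomogeneous.pow (w := bw n m) (biform_sum Finset.univ fun i _ =>
      IsWeightedHomogeneous.pow (isWeightedHomogeneous_X ℝ (bw n m) (Sum.inl i)) 2 :
      (∑ i : Fin n, X (Sum.inl i) ^ 2 : MvPolynomial (Fin n ⊕ Fin m) ℝ) ∈ Biform n m 2 0) a
    simpa [Biform, mul_comm] using h
  have h2 : ∀ a, (∑ i : Fin m, X (Sum.inr i) ^ 2 : MvPolynomial (Fin n ⊕ Fin m) ℝ) ^ a ∈
      Biform n m 0 (2 * a) := by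
    intro a
    have h := IsWeightedHomogeneous.pow (w := bw n m) (biform_sum Finset.univ fun i _ =>
      IsWeightedHomogeneous.pow (isWeightedHomogeneous_X ℝ (bw n m) (Sum.inr i)) 2 :
      (∑ i : Fin m, X (Sum.inr i) ^ 2 : MvPolynomial (Fin n ⊕ Fin m) ℝ) ∈ Biform n m 0 2) a
    simpa [Biform, mul_comm] using h
  have := biform_mul (h1 a) (h2 b)
  rwa [add_zero, zero_add] at this
end

lemma exists_isStein (ι : Type) [Fintype ι] : ∃ G : MvPolynomial ι ℝ →ₗ[ℝ] ℝ, IsStein G := by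
  obtain ⟨G, h1, h2, h3⟩ := exists_stein_functional ι
  exact ⟨G, h1, h2, h3⟩

section
variable {n m : ℕ} {I : MvPolynomial (Fin n ⊕ Fin m) ℝ →ₗ[ℝ] ℝ} {a b : ℕ}
  {f g h : MvPolynomial (Fin n ⊕ Fin m) ℝ}

lemma IsBisphereAverage.apol_self_le (hI : IsBisphereAverage n m I) (hf : f ∈ Biform n m a b) :
    apol f f ≤ gaussMoment n a * gaussMoment m b * I (f * f) := by
  obtain ⟨G, hG⟩ := exists_isStein (Fin n ⊕ Fin m)
  rw [← hG.eq_bisphereAverage hI a b _ (biform_mul_self hf hf)]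
  exact hG.apol_le _ _ (biform_isHomogeneous hf)

lemma IsBisphereAverage.pos (hI : IsBisphereAverage n m I) (hf : f ∈ Biform n m a b)
    (h0 : f ≠ 0) : 0 < I (f * f) := by
  refine (hI.nonneg f).lt_of_ne fun h => ?_
  have := (apol_pos h0).trans_le (hI.apol_self_le hf)
  rw [← h, mul_zero] at this
  exact this.false

lemma IsBisphereAverage.fourth_moment_le (hI : IsBisphereAverage n m I) (hn : 0 < n) (hm : 0 < m)
    (hf : f ∈ Biform n m a b) : I (f * f * (f * f)) ≤ (4 ^ (a + b) * I (f * f)) ^ 2 := by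
  obtain ⟨G, hG⟩ := exists_isStein (Fin n ⊕ Fin m)
  have h1 := hG.fourth_moment_le _ f (biform_isHomogeneous hf)
  have hff := biform_mul_self hf hf
  rw [hG.eq_bisphereAverage hI a b _ hff,
    hG.eq_bisphereAverage hI (2 * a) (2 * b) _ (biform_mul_self hff hff)] at h1
  have p1 := gaussMoment_pos hn (2 * a)
  have p2 := gaussMoment_pos hm (2 * b)
  have q : (gaussMoment n a * gaussMoment m b) ^ 2 ≤
      gaussMoment n (2 * a) * gaussMoment m (2 * b) := by
    rw [mul_pow]
    exact mul_le_mul (gaussMoment_sq_le n a) (gaussMoment_sq_le m b) (sq_nonneg _) p1.le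
  refine le_of_mul_le_mul_left (h1.trans ?_) (mul_pos p1 p2)
  calc _ = (gaussMoment n a * gaussMoment m b) ^ 2 * (4 ^ (a + b) * I (f * f)) ^ 2 := by ring
    _ ≤ _ := mul_le_mul_of_nonneg_right q (sq_nonneg _)

lemma IsBisphereAverage.mul_sq_le (hI : IsBisphereAverage n m I) (hn : 0 < n) (hm : 0 < m)
    (hf : f ∈ Biform n m a b) (hg : g ∈ Biform n m a b) :
    I (f * g * (f * g)) ≤ (4 ^ (a + b)) ^ 2 * (I (f * f) * I (g * g)) := by
  have h := cauchy_schwarz_of_nonneg_sq hI.nonneg (f * f) (g * g)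
  rw [show f * f * (g * g) = f * g * (f * g) by ring] at h
  have p1 := hI.nonneg f
  have p2 := hI.nonneg g
  refine le_of_sq_le_sq (h.trans ?_) (by positivity)
  calc _ ≤ (4 ^ (a + b) * I (f * f)) ^ 2 * (4 ^ (a + b) * I (g * g)) ^ 2 :=
        mul_le_mul (hI.fourth_moment_le hn hm hf) (hI.fourth_moment_le hn hm hg)
          (hI.nonneg _) (sq_nonneg _)
    _ = _ := by ring

lemma IsBisphereAverage.apol_mul_sq_le (hI : IsBisphereAverage n m I) (hn : 0 < n) (hm : 0 < m)
    (hf : f ∈ Biform n m a b) (hg : g ∈ Biform n m a b) (hh : h ∈ Biform n m (2 * a) (2 * b))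
    (hf1 : I (f * f) ≤ 1) (hg1 : I (g * g) ≤ 1) :
    apol (f * g) h ^ 2 ≤ (2 ^ (a + b) * (gaussMoment n a * gaussMoment m b)) ^ 2 *
      (gaussMoment n (2 * a) * gaussMoment m (2 * b)) * I (h * h) := by
  have p : 0 < gaussMoment n a * gaussMoment m b :=
    mul_pos (gaussMoment_pos hn a) (gaussMoment_pos hm b)
  have h1 : apol f f ≤ gaussMoment n a * gaussMoment m b :=
    (hI.apol_self_le hf).trans (mul_le_of_le_one_right p.le hf1)
  have h2 : apol g g ≤ gaussMoment n a * gaussMoment m b :=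
    (hI.apol_self_le hg).trans (mul_le_of_le_one_right p.le hg1)
  have h3 : apol (f * g) (f * g) ≤ (2 ^ (a + b) * (gaussMoment n a * gaussMoment m b)) ^ 2 := by
    refine (apol_mul_le _ (a + b) (a + b) f g rfl (biform_isHomogeneous hf)
      (biform_isHomogeneous hg)).trans ?_
    calc _ ≤ 2 ^ (a + b + (a + b)) *
        ((gaussMoment n a * gaussMoment m b) * (gaussMoment n a * gaussMoment m b)) := by
          gcongr
          exact apol_nonneg _
      _ = _ := by ring
  refine (apol_cauchy_schwarz _ _).trans ?_
  rw [mul_assoc]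
  exact mul_le_mul h3 (hI.apol_self_le hh) (apol_nonneg _) (sq_nonneg _)
end

lemma biform_finrank_le (n m a b : ℕ) :
    Module.Finite ℝ (weightedHomogeneousSubmodule ℝ (bw n m) (a, b)) ∧
    Module.finrank ℝ (weightedHomogeneousSubmodule ℝ (bw n m) (a, b)) ≤
      (n + a - 1).choose a * (m + b - 1).choose b := by
  set S := (Finset.univ : Finset (Fin n)).finsuppAntidiag a ×ˢ
    (Finset.univ : Finset (Fin m)).finsuppAntidiag b with hS
  let Φ : weightedHomogeneousSubmodule ℝ (bw n m) (a, b) →ₗ[ℝ] (S → ℝ) :=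
    LinearMap.pi fun s => lcoeff ℝ (Finsupp.sumFinsuppEquivProdFinsupp.symm s.1) ∘ₗ
      Submodule.subtype _
  have hΦ : Function.Injective Φ := by
    rw [← LinearMap.ker_eq_bot, LinearMap.ker_eq_bot']
    rintro ⟨f, hf⟩ h
    ext d
    by_contra hd
    have hd' : coeff d f ≠ 0 := by simpa using hd
    have hw := hf hd'
    have hmem : Finsupp.sumFinsuppEquivProdFinsupp d ∈ S := by
      rw [Finsupp.weight_apply, Finsupp.sum_fintype _ _ (by simp), Fintype.sum_sum_type] at hw
      have h1 := congrArg Prod.fst hw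
      have h2 := congrArg Prod.snd hw
      simp only [Prod.fst_add, Prod.snd_add, Prod.fst_sum, Prod.snd_sum] at h1 h2
      rw [hS, Finset.mem_product, Finset.mem_finsuppAntidiag, Finset.mem_finsuppAntidiag]
      refine ⟨⟨?_, by simp⟩, ⟨?_, by simp⟩⟩
      · change ∑ i, d (Sum.inl i) = a
        simpa [bw] using h1
      · change ∑ i, d (Sum.inr i) = b
        simpa [bw] using h2
    have := congrFun h ⟨_, hmem⟩
    simp [Φ] at this
    exact hd' this
  refine ⟨Module.Finite.of_injective Φ hΦ, (LinearMap.finrank_le_finrank_of_injective hΦ).trans ?_⟩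
  rw [Module.finrank_fintype_fun_eq_card, Fintype.card_coe, hS, Finset.card_product,
    Finset.card_finsuppAntidiag_nat_eq_choose, Finset.card_finsuppAntidiag_nat_eq_choose]
  simp

/-- A finite subset of the unit ball controlling all linear functionals up to a factor `2`. -/
lemma exists_norming_set (E : Type*) [NormedAddCommGroup E] [NormedSpace ℝ E]
    [FiniteDimensional ℝ E] : ∃ Γ : Finset E, Γ.card ≤ 5 ^ Module.finrank ℝ E ∧
      (∀ γ ∈ Γ, ‖γ‖ ≤ 1) ∧ ∀ (L : E →ₗ[ℝ] ℝ) (c : ℝ), (∀ γ ∈ Γ, L γ ≤ c) →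
        ∀ g : E, ‖g‖ ≤ 1 → L g ≤ 2 * c := by
  classical
  let P : Finset E → Prop := fun s => (∀ x ∈ s, ‖x‖ ≤ 2) ∧ ∀ x ∈ s, ∀ y ∈ s, x ≠ y → 1 ≤ ‖x - y‖
  have hbdd : BddAbove {k | ∃ s, P s ∧ s.card = k} := by
    refine ⟨5 ^ Module.finrank ℝ E, ?_⟩
    rintro _ ⟨s, hs, rfl⟩
    exact Besicovitch.card_le_of_separated s hs.1 hs.2
  obtain ⟨s, hs, hcard⟩ := Nat.sSup_mem (s := {k | ∃ s, P s ∧ s.card = k})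
    ⟨0, ∅, by simp [P], rfl⟩ hbdd
  have hcover : ∀ g : E, ‖g‖ ≤ 2 → ∃ x ∈ s, ‖g - x‖ ≤ 1 := by
    intro g hg
    by_contra! hcon
    have hgs : g ∉ s := fun h => by
      have := hcon g h
      simp at this
      linarith
    have hins : P (insert g s) := by
      refine ⟨?_, ?_⟩
      · intro x hx
        rcases Finset.mem_insert.mp hx with rfl | hx
        exacts [hg, hs.1 x hx]
      · intro x hx y hy hxy
        rcases Finset.mem_insert.mp hx with rfl | hx' <;>
          rcases Finset.mem_insert.mp hy with rfl | hy'
        · exact absurd rfl hxy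
        · exact (hcon y hy').le
        · rw [norm_sub_rev]; exact (hcon x hx').le
        · exact hs.2 x hx' y hy' hxy
    have := le_csSup hbdd ⟨_, hins, rfl⟩
    rw [← hcard, Finset.card_insert_of_notMem hgs] at this
    omega
  refine ⟨s.image ((1 / 2 : ℝ) • ·),
    Finset.card_image_le.trans (Besicovitch.card_le_of_separated s hs.1 hs.2), ?_, ?_⟩
  · intro γ hγ
    obtain ⟨x, hx, rfl⟩ := Finset.mem_image.mp hγ
    rw [norm_smul]
    norm_num
    linarith [hs.1 x hx]
  · intro L c hc g hg
    set L' := LinearMap.toContinuousLinearMap L with hL'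
    have key : ∀ g : E, ‖g‖ ≤ 1 → L g ≤ c + ‖L'‖ / 2 := by
      intro g hg
      obtain ⟨x, hx, hgx⟩ := hcover ((2 : ℝ) • g) (by rw [norm_smul]; norm_num; linarith)
      have h1 := hc _ (Finset.mem_image_of_mem _ hx)
      have h2 : L ((2 : ℝ) • g - x) ≤ ‖L'‖ * 1 :=
        (le_abs_self _).trans ((L'.le_opNorm _).trans (by gcongr))
      simp only [map_sub, map_smul, smul_eq_mul] at h1 h2
      linarith
    have hM : 0 ≤ c + ‖L'‖ / 2 := by simpa using key 0 (by simp)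
    have hop : ‖L'‖ ≤ c + ‖L'‖ / 2 := by
      refine L'.opNorm_le_bound hM fun x => ?_
      rcases eq_or_ne x 0 with rfl | hx
      · simp
      have hx' : 0 < ‖x‖ := norm_pos_iff.mpr hx
      have hu : ‖‖x‖⁻¹ • x‖ ≤ 1 := by rw [norm_smul, norm_inv, norm_norm, inv_mul_cancel₀ hx'.ne']
      have h1 := key _ hu
      have h2 := key (-(‖x‖⁻¹ • x)) (by rwa [norm_neg])
      rw [map_neg] at h2
      rw [map_smul, smul_eq_mul] at h1 h2
      have e : L x = ‖x‖ * (‖x‖⁻¹ * L x) := by field_simp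
      change |L x| ≤ _
      rw [e, abs_mul, abs_norm, mul_comm]
      gcongr
      exact abs_le.mpr ⟨by linarith, h1⟩
    linarith [key g hg]

lemma exists_biform_net {n m : ℕ} {I : MvPolynomial (Fin n ⊕ Fin m) ℝ →ₗ[ℝ] ℝ}
    (hI : IsBisphereAverage n m I) (a b : ℕ) :
    ∃ Γ : Finset (MvPolynomial (Fin n ⊕ Fin m) ℝ),
      Γ.card ≤ 5 ^ ((n + a - 1).choose a * (m + b - 1).choose b) ∧
      (∀ γ ∈ Γ, γ ∈ Biform n m a b ∧ I (γ * γ) ≤ 1) ∧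
      ∀ (L : MvPolynomial (Fin n ⊕ Fin m) ℝ →ₗ[ℝ] ℝ) (c : ℝ),
        (∀ γ ∈ Γ, ∀ γ' ∈ Γ, L (γ * γ') ≤ c) → ∀ g ∈ Biform n m a b, L (g * g) ≤ 4 * c * I (g * g) := by
  classical
  obtain ⟨hfin, hrank⟩ := biform_finrank_le n m a b
  set V := weightedHomogeneousSubmodule ℝ (bw n m) (a, b) with hV
  let core : InnerProductSpace.Core ℝ V :=
    { inner := fun f g => I (f.1 * g.1)
      conj_inner_symm := fun f g => by simp [mul_comm]
      re_inner_nonneg := fun f => by simpa using hI.nonneg f.1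
      add_left := fun f g h => by simp [add_mul]
      smul_left := fun f g r => by simp
      definite := fun f hf => by
        by_contra h0
        exact (hI.pos f.2 fun h => h0 (Subtype.ext h)).ne' hf }
  let : NormedAddCommGroup V := core.toNormedAddCommGroup
  let : InnerProductSpace ℝ V := InnerProductSpace.ofCore core.toCore
  have hnorm : ∀ f : V, ‖f‖ ≤ 1 ↔ I (f.1 * f.1) ≤ 1 := by
    intro f
    rw [← sq_le_one_iff₀ (norm_nonneg f), ← real_inner_self_eq_norm_sq]
    rfl
  obtain ⟨Γ, h1, h2, h3⟩ := exists_norming_set V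
  refine ⟨Γ.image Subtype.val, Finset.card_image_le.trans (h1.trans
    (Nat.pow_le_pow_right (by norm_num) hrank)), ?_, ?_⟩
  · intro γ hγ
    obtain ⟨x, hx, rfl⟩ := Finset.mem_image.mp hγ
    exact ⟨x.2, (hnorm x).mp (h2 x hx)⟩
  · intro L c hc g hg
    have step1 : ∀ γ ∈ Γ, ∀ g : V, ‖g‖ ≤ 1 → L (γ.1 * g.1) ≤ 2 * c := by
      intro γ hγ
      exact h3 (L ∘ₗ LinearMap.mulLeft ℝ γ.1 ∘ₗ V.subtype) c fun γ' hγ' =>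
        hc _ (Finset.mem_image_of_mem _ hγ) _ (Finset.mem_image_of_mem _ hγ')
    have step2 : ∀ g : V, ‖g‖ ≤ 1 → L (g.1 * g.1) ≤ 2 * (2 * c) := by
      intro g hg
      exact h3 (L ∘ₗ LinearMap.mulRight ℝ g.1 ∘ₗ V.subtype) _ (fun γ hγ => step1 γ hγ g hg) g hg
    rcases eq_or_ne g 0 with rfl | h0
    · simp
    have hp := hI.pos hg h0
    set r := √(I (g * g)) with hr
    have hr0 : 0 < r := Real.sqrt_pos.mpr hp
    have hr2 : r * r = I (g * g) := Real.mul_self_sqrt hp.le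
    have h4 := step2 ⟨r⁻¹ • g, biform_smul _ hg⟩ ((hnorm _).mpr (by
      simp only [smul_mul_smul_comm, map_smul, smul_eq_mul, ← hr2]
      apply le_of_eq; field_simp))
    simp only [smul_mul_smul_comm, map_smul, smul_eq_mul] at h4
    rw [← hr2]
    calc L (g * g) = (r⁻¹ * r⁻¹ * L (g * g)) * (r * r) := by field_simp
      _ ≤ (2 * (2 * c)) * (r * r) := by gcongr
      _ = _ := by ring

section
open scoped ENNReal Pointwise

/-- The closed Euclidean ball in `ℝ ^ D`, as a subset of `Fin D → ℝ`. -/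
def eball {D : ℕ} (c : Fin D → ℝ) (r : ℝ) : Set (Fin D → ℝ) := {x | (x - c) ⬝ᵥ (x - c) ≤ r ^ 2}

section
variable {D : ℕ}

lemma dotProduct_self_nonneg' (x : Fin D → ℝ) : 0 ≤ x ⬝ᵥ x :=
  Finset.sum_nonneg fun i _ => mul_self_nonneg (x i)

lemma volume_eball (c : Fin D → ℝ) {r : ℝ} (hr : 0 < r) :
    volume (eball c r) = ENNReal.ofReal (r ^ D) * volume (eball (0 : Fin D → ℝ) 1) := by
  have h1 : eball c r = (fun x => x + -c) ⁻¹' (r • eball (0 : Fin D → ℝ) 1) := by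
    ext x
    rw [Set.mem_preimage, Set.mem_smul_set_iff_inv_smul_mem₀ hr.ne']
    simp only [eball, Set.mem_ofPred_eq, sub_zero, smul_dotProduct, dotProduct_smul, smul_eq_mul,
      ← sub_eq_add_neg]
    rw [← mul_assoc, ← mul_inv, inv_mul_le_iff₀ (by positivity)]
    ring_nf
  rw [h1, measure_preimage_add_right, Measure.addHaar_smul]
  simp [abs_of_pos hr]

lemma volume_unit_eball_ne_zero : volume (eball (0 : Fin D → ℝ) 1) ≠ 0 := by
  have h : IsOpen {x : Fin D → ℝ | x ⬝ᵥ x < 1} := by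
    refine isOpen_lt ?_ continuous_const
    simp only [dotProduct]
    fun_prop
  refine ((h.measure_pos volume ⟨0, by simp⟩).trans_le (measure_mono fun x hx => ?_)).ne'
  simpa [eball] using le_of_lt hx

lemma volume_unit_eball_ne_top : volume (eball (0 : Fin D → ℝ) 1) ≠ ∞ := by
  refine (lt_of_le_of_lt (measure_mono fun x hx => ?_)
    (measure_closedBall_lt_top (x := (0 : Fin D → ℝ)) (r := 1))).ne
  rw [mem_closedBall_zero_iff, pi_norm_le_iff_of_nonneg zero_le_one]
  intro i
  have h : x i * x i ≤ x ⬝ᵥ x :=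
    Finset.single_le_sum (f := fun j => x j * x j) (fun j _ => mul_self_nonneg _) (Finset.mem_univ i)
  have hx' : x ⬝ᵥ x ≤ 1 := by simpa [eball] using hx
  rw [Real.norm_eq_abs]
  exact (sq_le_one_iff_abs_le_one _).mp (by nlinarith)

/-- Approximation by averages of `s` points (Maurey's argument in greedy form). -/
lemma exists_sum_sub_le {W : Finset (Fin D → ℝ)} {x : Fin D → ℝ} {ρ : ℝ}
    (hρ : ∀ w ∈ W, (w - x) ⬝ᵥ (w - x) ≤ ρ ^ 2)
    (hx : ∀ e : Fin D → ℝ, ∃ w ∈ W, e ⬝ᵥ x ≤ e ⬝ᵥ w) (s : ℕ) :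
    ∃ w : Fin s → W, (∑ j, ((w j : Fin D → ℝ) - x)) ⬝ᵥ (∑ j, ((w j : Fin D → ℝ) - x)) ≤
      s * ρ ^ 2 := by
  induction s with
  | zero => exact ⟨Fin.elim0, by simp⟩
  | succ s ih =>
    obtain ⟨w, hw⟩ := ih
    set S := ∑ j, ((w j : Fin D → ℝ) - x) with hS
    obtain ⟨v, hv, hle⟩ := hx (-S)
    refine ⟨Fin.cons ⟨v, hv⟩ w, ?_⟩
    rw [Fin.sum_univ_succ]
    simp only [Fin.cons_zero, Fin.cons_succ]
    rw [← hS, add_dotProduct, dotProduct_add, dotProduct_add, dotProduct_comm (v - x) S]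
    have h1 := hρ v hv
    have h2 : S ⬝ᵥ (v - x) ≤ 0 := by
      rw [neg_dotProduct, neg_dotProduct] at hle
      rw [dotProduct_sub]
      linarith
    push_cast
    linarith

lemma volume_le_of_support_finite {W : Finset (Fin D → ℝ)} {K : Set (Fin D → ℝ)} {ρ : ℝ}
    (hρ0 : 0 < ρ) (hρ : ∀ x ∈ K, ∀ w ∈ W, (w - x) ⬝ᵥ (w - x) ≤ ρ ^ 2)
    (hK : ∀ x ∈ K, ∀ e : Fin D → ℝ, ∃ w ∈ W, e ⬝ᵥ x ≤ e ⬝ᵥ w) {s : ℕ} (hs : 0 < s) :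
    volume K ≤ ENNReal.ofReal ((W.card : ℝ) ^ s * (ρ / √s) ^ D) *
      volume (eball (0 : Fin D → ℝ) 1) := by
  have hs' : (0 : ℝ) < s := by exact_mod_cast hs
  have hsub : K ⊆ ⋃ w : Fin s → W, eball ((s : ℝ)⁻¹ • ∑ j, (w j : Fin D → ℝ)) (ρ / √s) := by
    intro x hx
    obtain ⟨w, hw⟩ := exists_sum_sub_le (hρ x hx) (hK x hx) s
    refine Set.mem_iUnion.mpr ⟨w, ?_⟩
    have e : x - (s : ℝ)⁻¹ • ∑ j, (w j : Fin D → ℝ) =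
        (-(s : ℝ)⁻¹) • ∑ j, ((w j : Fin D → ℝ) - x) := by
      rw [Finset.sum_sub_distrib, smul_sub, Finset.sum_const, Finset.card_univ, Fintype.card_fin,
        ← Nat.cast_smul_eq_nsmul ℝ, smul_smul, neg_mul, inv_mul_cancel₀ hs'.ne', neg_smul]
      simp [sub_eq_add_neg, add_comm]
    rw [eball, Set.mem_ofPred_eq]
    rw [e, smul_dotProduct, dotProduct_smul, smul_eq_mul, smul_eq_mul, div_pow,
      Real.sq_sqrt hs'.le, le_div_iff₀ hs']
    calc _ = (s : ℝ)⁻¹ * ((∑ j, ((w j : Fin D → ℝ) - x)) ⬝ᵥ (∑ j, ((w j : Fin D → ℝ) - x))) := by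
          field_simp
      _ ≤ (s : ℝ)⁻¹ * (s * ρ ^ 2) := by gcongr
      _ = ρ ^ 2 := by field_simp
  have hr : 0 < ρ / √s := by positivity
  calc volume K ≤ ∑ w : Fin s → W, volume (eball ((s : ℝ)⁻¹ • ∑ j, (w j : Fin D → ℝ)) (ρ / √s)) :=
        (measure_mono hsub).trans (measure_iUnion_fintype_le _ _)
    _ = _ := by
      simp_rw [volume_eball _ hr]
      rw [Finset.sum_const, Finset.card_univ, Fintype.card_fun, Fintype.card_coe, Fintype.card_fin,
        nsmul_eq_mul, ← mul_assoc, ENNReal.ofReal_mul (by positivity)]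
      congr 2
      rw [← Nat.cast_pow, ENNReal.ofReal_natCast]

lemma le_volume_of_finite_halfspaces {U : Finset (Fin D → ℝ)} {K : Set (Fin D → ℝ)} {ρ β τ : ℝ}
    (hD : 0 < D) (hρ : 0 < ρ) (hβ : 0 < β) (hτ : 0 ≤ τ) (hU : ∀ u ∈ U, u ⬝ᵥ u ≤ β ^ 2)
    (hcard : (U.card : ℝ) * Real.exp (-(τ ^ 2 / 2)) ^ D ≤ 1 / 2)
    (hK : ∀ x, (∀ u ∈ U, u ⬝ᵥ x ≤ τ * ρ * β) → x ∈ K) :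
    ENNReal.ofReal ((ρ / 2) ^ D) * volume (eball (0 : Fin D → ℝ) 1) ≤ volume K := by
  set V := volume (eball (0 : Fin D → ℝ) 1) with hV
  set δ := ρ * Real.exp (-(τ ^ 2 / 2)) with hδ
  have hδ0 : 0 < δ := by positivity
  have hcap : ∀ u ∈ U, {x : Fin D → ℝ | x ⬝ᵥ x ≤ ρ ^ 2 ∧ τ * ρ * β < u ⬝ᵥ x} ⊆
      eball ((τ * ρ / β) • u) δ := by
    rintro u hu x ⟨h1, h2⟩
    rw [eball, Set.mem_ofPred_eq]
    rw [sub_dotProduct, dotProduct_sub, dotProduct_sub, smul_dotProduct, dotProduct_smul,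
      smul_dotProduct, dotProduct_smul, dotProduct_comm x u]
    simp only [smul_eq_mul]
    have h3 : τ * ρ / β * (τ * ρ / β * (u ⬝ᵥ u)) ≤ (τ * ρ) ^ 2 := by
      calc _ ≤ τ * ρ / β * (τ * ρ / β * β ^ 2) := by gcongr; exact hU u hu
        _ = _ := by field_simp
    have h4 : (τ * ρ) ^ 2 ≤ τ * ρ / β * (u ⬝ᵥ x) := by
      calc (τ * ρ) ^ 2 = τ * ρ / β * (τ * ρ * β) := by field_simp
        _ ≤ _ := by gcongr
    have h5 : ρ ^ 2 * (1 - τ ^ 2) ≤ δ ^ 2 := by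
      have : Real.exp (-(τ ^ 2 / 2)) ^ 2 = Real.exp (-τ ^ 2) := by
        rw [← Real.exp_nat_mul]; congr 1; push_cast; ring
      rw [hδ, mul_pow, this]
      gcongr
      linarith [Real.add_one_le_exp (-τ ^ 2)]
    nlinarith
  have hsub : eball (0 : Fin D → ℝ) ρ ⊆ K ∪ ⋃ u ∈ U, eball ((τ * ρ / β) • u) δ := by
    intro x hx
    by_cases h : ∀ u ∈ U, u ⬝ᵥ x ≤ τ * ρ * β
    · exact Or.inl (hK x h)
    · push Not at h
      obtain ⟨u, hu, hux⟩ := h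
      refine Or.inr (Set.mem_iUnion₂.mpr ⟨u, hu, hcap u hu ⟨by simpa [eball] using hx, hux⟩⟩)
  have h1 : volume (⋃ u ∈ U, eball ((τ * ρ / β) • u) δ) ≤ ENNReal.ofReal (ρ ^ D / 2) * V := by
    refine (measure_biUnion_finset_le _ _).trans ?_
    simp_rw [volume_eball _ hδ0]
    rw [Finset.sum_const, nsmul_eq_mul, ← mul_assoc, ← ENNReal.ofReal_natCast,
      ← ENNReal.ofReal_mul (by positivity)]
    gcongr
    rw [hδ, mul_pow]
    calc _ = ρ ^ D * (U.card * Real.exp (-(τ ^ 2 / 2)) ^ D) := by ring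
      _ ≤ ρ ^ D * (1 / 2) := by gcongr
      _ = _ := by ring
  have h2 : ENNReal.ofReal (ρ ^ D / 2) * V + ENNReal.ofReal (ρ ^ D / 2) * V ≤
      volume K + ENNReal.ofReal (ρ ^ D / 2) * V := by
    calc _ = volume (eball (0 : Fin D → ℝ) ρ) := by
          rw [volume_eball _ hρ, ← add_mul, ← ENNReal.ofReal_add (by positivity) (by positivity),
            add_halves]
      _ ≤ _ := (measure_mono hsub).trans ((measure_union_le _ _).trans (by gcongr))
  have h3 := (ENNReal.add_le_add_iff_right
    (ENNReal.mul_ne_top ENNReal.ofReal_ne_top volume_unit_eball_ne_top)).mp h2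
  refine le_trans ?_ h3
  gcongr
  rw [div_pow]
  gcongr
  exact le_self_pow₀ (by norm_num) hD.ne'

lemma rpow_div_volume_bounds {K : Set (Fin D → ℝ)} {d e : ℝ} (hD : 0 < D) (hd : 0 ≤ d) (he : 0 ≤ e)
    (h1 : ENNReal.ofReal (d ^ D) * volume (eball (0 : Fin D → ℝ) 1) ≤ volume K)
    (h2 : volume K ≤ ENNReal.ofReal (e ^ D) * volume (eball (0 : Fin D → ℝ) 1)) :
    ENNReal.ofReal d ≤ (volume K / volume (eball (0 : Fin D → ℝ) 1)) ^ ((1 : ℝ) / D) ∧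
      (volume K / volume (eball (0 : Fin D → ℝ) 1)) ^ ((1 : ℝ) / D) ≤ ENNReal.ofReal e := by
  have hD' : (0 : ℝ) ≤ 1 / D := by positivity
  have root : ∀ c : ℝ, 0 ≤ c → ENNReal.ofReal (c ^ D) ^ ((1 : ℝ) / D) = ENNReal.ofReal c := by
    intro c hc
    rw [ENNReal.ofReal_pow hc, one_div, ENNReal.pow_rpow_inv_natCast hD.ne']
  constructor
  · rw [← root d hd]
    refine ENNReal.rpow_le_rpow ?_ hD'
    rwa [ENNReal.le_div_iff_mul_le (Or.inl volume_unit_eball_ne_zero)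
      (Or.inl volume_unit_eball_ne_top)]
  · rw [← root e he]
    refine ENNReal.rpow_le_rpow ?_ hD'
    exact ENNReal.div_le_of_le_mul h2
end

end

section
variable {D : ℕ}

/-- The vector representing a linear functional on `ℝ ^ D` with respect to the dot product. -/
def dualVec (L : (Fin D → ℝ) →ₗ[ℝ] ℝ) : Fin D → ℝ := fun i => L (Pi.single i 1)

lemma dualVec_dotProduct (L : (Fin D → ℝ) →ₗ[ℝ] ℝ) (x : Fin D → ℝ) : dualVec L ⬝ᵥ x = L x := by
  conv_rhs => rw [← Finset.univ_sum_single x, map_sum]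
  refine Finset.sum_congr rfl fun i _ => ?_
  rw [mul_comm, ← smul_eq_mul, dualVec, ← map_smul, ← Pi.single_smul, smul_eq_mul, mul_one]

lemma dualVec_dotProduct_self_le {L : (Fin D → ℝ) →ₗ[ℝ] ℝ} {c : ℝ}
    (h : ∀ x, L x ^ 2 ≤ c ^ 2 * (x ⬝ᵥ x)) : dualVec L ⬝ᵥ dualVec L ≤ c ^ 2 := by
  have h1 := h (dualVec L)
  rw [← dualVec_dotProduct L (dualVec L)] at h1
  by_contra! h2
  have h3 : 0 < dualVec L ⬝ᵥ dualVec L := (sq_nonneg c).trans_lt h2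
  nlinarith

lemma sub_dotProduct_self_le (u v : Fin D → ℝ) :
    (u - v) ⬝ᵥ (u - v) ≤ 2 * (u ⬝ᵥ u) + 2 * (v ⬝ᵥ v) := by
  have h := dotProduct_self_nonneg' (u + v)
  rw [add_dotProduct, dotProduct_add, dotProduct_add] at h
  rw [sub_dotProduct, dotProduct_sub, dotProduct_sub]
  linarith

variable {n m : ℕ} {I : MvPolynomial (Fin n ⊕ Fin m) ℝ →ₗ[ℝ] ℝ} {a b : ℕ}
  {ψ : (Fin D → ℝ) →ₗ[ℝ] MvPolynomial (Fin n ⊕ Fin m) ℝ}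

lemma volume_sqSection_le (hI : IsBisphereAverage n m I) (hn : 0 < n) (hm : 0 < m)
    (hψ0 : ∀ x, I (ψ x) = 0)
    (hψ : ∀ x y, I (ψ x * ψ y) = x ⬝ᵥ y) {s : ℕ} (hs : 0 < s) :
    volume {x | ψ x + qpoly n m a b ∈ SqSet n m a b} ≤
      ENNReal.ofReal ((25 ^ ((n + a - 1).choose a * (m + b - 1).choose b)) ^ s *
        (6 * 4 ^ (a + b) / √s) ^ D) * volume (eball (0 : Fin D → ℝ) 1) := by
  classical
  obtain ⟨Γ, hΓc, hΓ, hnorm⟩ := exists_biform_net hI a b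
  set R : ℝ := 4 ^ (a + b) with hR
  have hR0 : 0 < R := by positivity
  set L : MvPolynomial (Fin n ⊕ Fin m) ℝ → (Fin D → ℝ) →ₗ[ℝ] ℝ := fun p =>
    (4 : ℝ) • (I ∘ₗ LinearMap.mulRight ℝ p ∘ₗ ψ) with hL
  have hLa : ∀ p x, L p x = 4 * I (ψ x * p) := fun p x => by simp [hL]
  set W := (Γ ×ˢ Γ).image (fun p => dualVec (L (p.1 * p.2))) with hW
  have hcard : (W.card : ℝ) ≤ 25 ^ ((n + a - 1).choose a * (m + b - 1).choose b) := by
    have h1 : W.card ≤ Γ.card * Γ.card := Finset.card_image_le.trans_eq (Finset.card_product _ _)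
    have h2 := h1.trans (Nat.mul_le_mul hΓc hΓc)
    rw [← mul_pow] at h2
    exact_mod_cast h2
  have hw : ∀ w ∈ W, w ⬝ᵥ w ≤ (4 * R) ^ 2 := by
    intro w hw
    obtain ⟨⟨γ, γ'⟩, hγ, rfl⟩ := Finset.mem_image.mp hw
    obtain ⟨h1, h2⟩ := Finset.mem_product.mp hγ
    refine dualVec_dotProduct_self_le fun x => ?_
    have c1 := cauchy_schwarz_of_nonneg_sq hI.nonneg (ψ x) (γ * γ')
    have c2 := hI.mul_sq_le hn hm (hΓ γ h1).1 (hΓ γ' h2).1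
    have c3 : I (γ * γ) * I (γ' * γ') ≤ 1 :=
      mul_le_one₀ (hΓ γ h1).2 (hI.nonneg _) (hΓ γ' h2).2
    have c4 : I (γ * γ' * (γ * γ')) ≤ R ^ 2 := by nlinarith [sq_nonneg R]
    have c5 := hψ x x
    have c6 := hI.nonneg (ψ x)
    rw [hLa]
    rw [c5] at c1 c6
    nlinarith [mul_le_mul_of_nonneg_left c4 c6]
  have key : ∀ x, ψ x + qpoly n m a b ∈ SqSet n m a b → ∃ (N : ℕ)
      (g : Fin N → MvPolynomial (Fin n ⊕ Fin m) ℝ), (∀ i, g i ∈ Biform n m a b) ∧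
      ∑ i, I (g i * g i) = 1 ∧ ∀ y, y ⬝ᵥ x = ∑ i, I (ψ y * (g i * g i)) := by
    rintro x ⟨N, g, hg, hsum⟩
    have hq := hI.qpoly_mul a b
    refine ⟨N, g, hg, ?_, fun y => ?_⟩
    · rw [← map_sum]
      simp_rw [← sq]
      rw [← hsum, map_add, hψ0, zero_add, ← mul_one (qpoly n m a b), hq, hI.one]
    · rw [← map_sum, ← Finset.mul_sum]
      simp_rw [← sq]
      rw [← hsum, mul_add, map_add, hψ, mul_comm (ψ y) (qpoly n m a b), hq, hψ0, add_zero]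
  have hx : ∀ x, ψ x + qpoly n m a b ∈ SqSet n m a b → x ⬝ᵥ x ≤ R ^ 2 := by
    intro x hx
    obtain ⟨N, g, hg, h1, h2⟩ := key x hx
    have h3 : x ⬝ᵥ x ≤ √(x ⬝ᵥ x) * R := by
      calc x ⬝ᵥ x = ∑ i, I (ψ x * (g i * g i)) := h2 x
        _ ≤ ∑ i, √(x ⬝ᵥ x) * R * I (g i * g i) := by
          refine Finset.sum_le_sum fun i _ => ?_
          refine le_of_sq_le_sq ?_ ?_
          · have c1 := cauchy_schwarz_of_nonneg_sq hI.nonneg (ψ x) (g i * g i)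
            have c2 := hI.mul_sq_le hn hm (hg i) (hg i)
            rw [hψ] at c1
            rw [mul_pow, mul_pow, Real.sq_sqrt (dotProduct_self_nonneg' x)]
            refine c1.trans ?_
            calc _ ≤ x ⬝ᵥ x * ((4 ^ (a + b)) ^ 2 * (I (g i * g i) * I (g i * g i))) :=
                  mul_le_mul_of_nonneg_left c2 (dotProduct_self_nonneg' x)
              _ = _ := by ring
          · exact mul_nonneg (by positivity) (hI.nonneg _)
        _ = _ := by rw [← Finset.mul_sum, h1, mul_one]
    have h4 := Real.sq_sqrt (dotProduct_self_nonneg' x)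
    have h5 := Real.sqrt_nonneg (x ⬝ᵥ x)
    set t := √(x ⬝ᵥ x)
    rw [← h4] at h3 ⊢
    have h6 : t ≤ R := by
      by_contra! h
      nlinarith
    gcongr
  refine (volume_le_of_support_finite (W := W) (ρ := 6 * R) (by positivity) ?_ ?_ hs).trans ?_
  · intro x hxK w hwW
    have h1 := sub_dotProduct_self_le w x
    have h2 := hw w hwW
    have h3 := hx x hxK
    nlinarith
  · intro x hxK e
    obtain ⟨N, g, hg, h1, h2⟩ := key x hxK
    by_contra! hlt
    have hne : Γ.Nonempty := by
      by_contra! h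
      have h3 : ∀ i, I (g i * g i) ≤ 0 := fun i => by
        simpa using hnorm I 0 (by simp [h]) (g i) (hg i)
      have := Finset.sum_nonpos (s := Finset.univ) fun i _ => h3 i
      linarith
    obtain ⟨p, hp, hmax⟩ := (Γ ×ˢ Γ).exists_max_image (fun p => L (p.1 * p.2) e)
      (hne.product hne)
    have h3 := hlt _ (Finset.mem_image_of_mem _ hp)
    rw [dotProduct_comm e (dualVec _), dualVec_dotProduct] at h3
    set c := L (p.1 * p.2) e
    have h4 : ∀ i, I (ψ e * (g i * g i)) ≤ c * I (g i * g i) := fun i => by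
      have := hnorm (I ∘ₗ LinearMap.mulLeft ℝ (ψ e)) (c / 4) (fun γ hγ γ' hγ' => by
        have := hmax (γ, γ') (Finset.mk_mem_product hγ hγ')
        rw [hLa] at this
        simp only [LinearMap.comp_apply, LinearMap.mulLeft_apply]
        linarith) (g i) (hg i)
      simp only [LinearMap.comp_apply, LinearMap.mulLeft_apply] at this
      linarith
    have h5 := Finset.sum_le_sum (s := Finset.univ) fun i _ => h4 i
    rw [← h2, ← Finset.mul_sum, h1] at h5
    linarith
  · gcongr

lemma le_volume_sqSection (hI : IsBisphereAverage n m I) (hn : 0 < n) (hm : 0 < m)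
    (hψB : ∀ x, ψ x ∈ Biform n m (2 * a) (2 * b))
    (hψ : ∀ x y, I (ψ x * ψ y) = x ⬝ᵥ y) (hD : 0 < D) {τ : ℝ} (hτ : 0 < τ)
    (hP : 8 * ((n + a - 1).choose a * (m + b - 1).choose b : ℕ) ≤ τ ^ 2 * D)
    (hP0 : 0 < (n + a - 1).choose a * (m + b - 1).choose b) :
    ENNReal.ofReal ((a.factorial * b.factorial /
        (8 * τ * √(gaussMoment n (2 * a) * gaussMoment m (2 * b)))) ^ D) *
      volume (eball (0 : Fin D → ℝ) 1) ≤
      volume {x | ψ x + qpoly n m a b ∈ SqSet n m a b} := by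
  classical
  obtain ⟨Γ, hΓc, hΓ, hnorm⟩ := exists_biform_net hI a b
  set P := (n + a - 1).choose a * (m + b - 1).choose b
  set g₁ := gaussMoment n a * gaussMoment m b with hg₁
  set g₂ := gaussMoment n (2 * a) * gaussMoment m (2 * b) with hg₂
  have hg₁0 : 0 < g₁ := mul_pos (gaussMoment_pos hn a) (gaussMoment_pos hm b)
  have hg₂0 : 0 < g₂ := mul_pos (gaussMoment_pos hn _) (gaussMoment_pos hm _)
  set L : MvPolynomial (Fin n ⊕ Fin m) ℝ → (Fin D → ℝ) →ₗ[ℝ] ℝ := fun p =>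
    -(apol p ∘ₗ ψ) with hL
  have hLa : ∀ p x, L p x = -apol p (ψ x) := fun p x => by simp [hL]
  set U := (Γ ×ˢ Γ).image (fun p => dualVec (L (p.1 * p.2))) with hU
  have hcard : (U.card : ℝ) ≤ 25 ^ P := by
    have h1 : U.card ≤ Γ.card * Γ.card := Finset.card_image_le.trans_eq (Finset.card_product _ _)
    have h2 := h1.trans (Nat.mul_le_mul hΓc hΓc)
    rw [← mul_pow] at h2
    exact_mod_cast h2
  set ρ : ℝ := a.factorial * b.factorial / (4 * τ * √g₂) with hρ
  set β : ℝ := 2 ^ (a + b) * g₁ * √g₂ with hβ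
  have hρ0 : 0 < ρ := by positivity
  have hβ0 : 0 < β := by positivity
  have hmul : τ * ρ * β = 2 ^ (a + b) * (a.factorial * b.factorial) * g₁ / 4 := by
    rw [hρ, hβ]
    field_simp
  have := le_volume_of_finite_halfspaces (U := U)
    (K := {x | ψ x + qpoly n m a b ∈ SqSet n m a b}) (τ := τ) hD hρ0 hβ0 hτ.le ?_ ?_ ?_
  · refine le_trans (le_of_eq ?_) this
    congr 3
    rw [hρ]
    field_simp
    norm_num
  · intro u hu
    obtain ⟨⟨γ, γ'⟩, hγ, rfl⟩ := Finset.mem_image.mp hu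
    obtain ⟨h1, h2⟩ := Finset.mem_product.mp hγ
    refine dualVec_dotProduct_self_le fun x => ?_
    rw [hLa, neg_sq, ← hψ, hβ, mul_pow, Real.sq_sqrt hg₂0.le]
    exact hI.apol_mul_sq_le hn hm (hΓ γ h1).1 (hΓ γ' h2).1 (hψB x) (hΓ γ h1).2 (hΓ γ' h2).2
  · have e1 : Real.exp (-(τ ^ 2 / 2)) ^ D ≤ Real.exp (-4) ^ P := by
      rw [← Real.exp_nat_mul, ← Real.exp_nat_mul, Real.exp_le_exp]
      linarith
    have e2 : 25 * Real.exp (-4) ≤ 1 / 2 := by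
      have h1 : (50 : ℝ) ≤ Real.exp 4 := by
        have h2 : (2.7 : ℝ) ≤ Real.exp 1 := by linarith [Real.exp_one_gt_d9]
        calc (50 : ℝ) ≤ 2.7 ^ 4 := by norm_num
          _ ≤ Real.exp 1 ^ 4 := by gcongr
          _ = Real.exp 4 := by rw [← Real.exp_nat_mul]; norm_num
      rw [Real.exp_neg, ← div_eq_mul_inv, div_le_iff₀ (Real.exp_pos _)]
      linarith
    calc (U.card : ℝ) * Real.exp (-(τ ^ 2 / 2)) ^ D ≤ 25 ^ P * Real.exp (-4) ^ P := by gcongr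
      _ = (25 * Real.exp (-4)) ^ P := by rw [mul_pow]
      _ ≤ (1 / 2) ^ P := by gcongr
      _ ≤ 1 / 2 := pow_le_of_le_one (by norm_num) (by norm_num) hP0.ne'
  · intro x hx
    refine mem_sqSet_of_apol_nonneg (biform_add (hψB x) (qpoly_mem_biform a b)) fun g hg => ?_
    rw [hmul] at hx
    have h1 := hnorm (-(LinearMap.flip apol (ψ x)))
      (2 ^ (a + b) * (a.factorial * b.factorial) * g₁ / 4) (fun γ hγ γ' hγ' => by
        have := hx _ (Finset.mem_image_of_mem _ (Finset.mk_mem_product hγ hγ'))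
        rw [dualVec_dotProduct, hLa] at this
        simpa using this) g hg
    have h2 := apol_qpoly hI a b (g * g) (biform_mul_self hg hg)
    rw [map_add, apol_comm _ (qpoly n m a b), h2]
    simp only [LinearMap.neg_apply, LinearMap.flip_apply] at h1
    linarith

end

lemma factorial_two_mul_mul_choose (n a : ℕ) :
    (2 * a).factorial * (n + 2 * a - 1).choose (2 * a) =
      a.factorial * (n + a - 1).choose a * (n + a).ascFactorial a := by
  rw [← Nat.ascFactorial_eq_factorial_mul_choose', ← Nat.ascFactorial_eq_factorial_mul_choose',
    two_mul, Nat.ascFactorial_mul_ascFactorial]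

lemma two_mul_choose_le {n a : ℕ} (hn : 3 ≤ n) (ha : 0 < a) :
    2 * (n + a - 1).choose a ≤ (n + 2 * a - 1).choose (2 * a) := by
  have h1 := factorial_two_mul_mul_choose n a
  have h2 : (2 * a).factorial = a.factorial * (a + 1).ascFactorial a := by
    rw [Nat.factorial_mul_ascFactorial, two_mul]
  have h3 : 2 * (a + 1).ascFactorial a ≤ (n + a).ascFactorial a := by
    have h4 : (a + 1) * ((a + 2) * (a + 3).ascFactorial a) =
        (a + 1).ascFactorial a * ((2 * a + 1) * (2 * a + 2)) := by
      have e1 := Nat.ascFactorial_mul_ascFactorial (a + 1) 2 a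
      have e2 := Nat.ascFactorial_mul_ascFactorial (a + 1) a 2
      rw [add_comm 2 a, ← e2] at e1
      simp only [Nat.ascFactorial] at e1
      ring_nf at e1 ⊢
      linarith
    have h5 : 2 * (a + 1).ascFactorial a ≤ (a + 3).ascFactorial a := by
      have h6 : 2 * ((a + 1) * (a + 2)) ≤ (2 * a + 1) * (2 * a + 2) := by nlinarith
      have h7 := Nat.mul_le_mul_left ((a + 1).ascFactorial a) h6
      rw [← h4] at h7
      refine Nat.le_of_mul_le_mul_left (c := (a + 1) * (a + 2)) ?_ (by positivity)
      linarith
    exact h5.trans (Nat.ascFactorial_le _ (by omega))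
  rw [h2] at h1
  refine Nat.le_of_mul_le_mul_left (c := a.factorial * (a + 1).ascFactorial a) ?_
    (by have := Nat.ascFactorial_pos (a + 1) a; positivity)
  rw [h1]
  calc _ = a.factorial * (n + a - 1).choose a * (2 * (a + 1).ascFactorial a) := by ring
    _ ≤ _ := by gcongr

lemma le_choose {n a : ℕ} (hn : 0 < n) (ha : 0 < a) : n ≤ (n + a - 1).choose a := by
  obtain ⟨n, rfl⟩ : ∃ k, n = k + 1 := ⟨n - 1, by omega⟩
  rw [show n + 1 + a - 1 = n + a by omega, Nat.choose_symm_add.symm]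
  calc n + 1 = (n + 1).choose n := by simp
    _ ≤ _ := Nat.choose_le_choose n (by omega)

lemma choose_mul_succ_pow_le (n : ℕ) {a : ℕ} (ha : 0 < a) :
    a.factorial * (n + a - 1).choose a * (n + 1) ^ a ≤
      (2 * a).factorial * (n + 2 * a - 1).choose (2 * a) := by
  rw [factorial_two_mul_mul_choose]
  gcongr
  calc (n + 1) ^ a ≤ (n + a) ^ a := by gcongr; omega
    _ ≤ _ := Nat.pow_succ_le_ascFactorial _ _

section
variable {n m a b D : ℕ}

lemma two_mul_choose_mul_choose_le (hn : 3 ≤ n) (hm : 3 ≤ m) (ha : 0 < a) (hb : 0 < b)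
    (hD : D = (n + 2 * a - 1).choose (2 * a) * (m + 2 * b - 1).choose (2 * b) - 1) :
    2 * ((n + a - 1).choose a * (m + b - 1).choose b) ≤ D := by
  have h := Nat.mul_le_mul (two_mul_choose_le hn ha) (two_mul_choose_le hm hb)
  have h1 := Nat.mul_le_mul (le_choose (by omega : 0 < n) ha) (le_choose (by omega : 0 < m) hb)
  have h2 := Nat.mul_le_mul hn hm
  rw [hD]
  refine Nat.le_sub_one_of_lt ?_
  nlinarith

lemma choose_mul_choose_le (hn : 3 ≤ n) (hm : 3 ≤ m) (ha : 0 < a) (hb : 0 < b)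
    (hD : D = (n + 2 * a - 1).choose (2 * a) * (m + 2 * b - 1).choose (2 * b) - 1) :
    (n + a - 1).choose a * (m + b - 1).choose b * (a.factorial * b.factorial * (n ^ a * m ^ b)) ≤
      D * ((2 * a).factorial * (2 * b).factorial) := by
  have h2 := two_mul_choose_mul_choose_le hn hm ha hb hD
  have hnD : n ≤ D := by
    have h1 := Nat.mul_le_mul (le_choose (by omega : 0 < n) ha) (le_choose (by omega : 0 < m) hb)
    nlinarith
  have hD1 : D + 1 = (n + 2 * a - 1).choose (2 * a) * (m + 2 * b - 1).choose (2 * b) := by omega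
  have h3 := Nat.mul_le_mul (choose_mul_succ_pow_le n ha) (choose_mul_succ_pow_le m hb)
  set P := (n + a - 1).choose a * (m + b - 1).choose b
  have h4 : n ^ a * (n + 1) ≤ n * (n + 1) ^ a := by
    obtain ⟨a, rfl⟩ : ∃ c, a = c + 1 := ⟨a - 1, by omega⟩
    rw [pow_succ, pow_succ]
    have : n ^ a ≤ (n + 1) ^ a := by gcongr; omega
    nlinarith [Nat.mul_le_mul_right (n * (n + 1)) this]
  refine Nat.le_of_mul_le_mul_left (c := n + 1) ?_ (by omega)
  calc _ = P * (a.factorial * b.factorial) * (n ^ a * (n + 1) * m ^ b) := by ring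
    _ ≤ P * (a.factorial * b.factorial) * (n * (n + 1) ^ a * (m + 1) ^ b) := by
      gcongr
      omega
    _ = n * ((a.factorial * (n + a - 1).choose a * (n + 1) ^ a) *
        (b.factorial * (m + b - 1).choose b * (m + 1) ^ b)) := by ring
    _ ≤ n * (((2 * a).factorial * (n + 2 * a - 1).choose (2 * a)) *
        ((2 * b).factorial * (m + 2 * b - 1).choose (2 * b))) := by gcongr
    _ = n * (D + 1) * ((2 * a).factorial * (2 * b).factorial) := by rw [hD1]; ring
    _ ≤ (n + 1) * D * ((2 * a).factorial * (2 * b).factorial) := by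
      gcongr ?_ * _
      nlinarith
    _ = _ := by ring

lemma mul_add_add_le (hn : 3 ≤ n) (hm : 3 ≤ m)
    (hD : D = (n + 2 * 1 - 1).choose (2 * 1) * (m + 2 * 1 - 1).choose (2 * 1) - 1) :
    (n + 1 - 1).choose 1 * (m + 1 - 1).choose 1 * (n * m + n + m) ≤ D * 4 := by
  have h : ∀ k : ℕ, (k + 2 * 1 - 1).choose (2 * 1) * 2 = k * (k + 1) := by
    intro k
    rw [show k + 2 * 1 - 1 = k + 1 by omega, mul_one, Nat.choose_two_right, Nat.add_sub_cancel,
      mul_comm k, Nat.div_mul_cancel (by rw [mul_comm]; exact (Nat.even_mul_succ_self k).two_dvd)]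
  have h1 := h n
  have h2 := h m
  simp only [Nat.add_sub_cancel, Nat.choose_one_right]
  have h3 := Nat.mul_le_mul hn hm
  set u := (n + 2 * 1 - 1).choose (2 * 1)
  set v := (m + 2 * 1 - 1).choose (2 * 1)
  have h4 : (D + 1) * 4 = n * (n + 1) * (m * (m + 1)) := by
    have : 0 < u * v := Nat.mul_pos (by nlinarith) (by nlinarith)
    rw [← h1, ← h2, hD, Nat.sub_add_cancel this]
    ring
  nlinarith

variable {I : MvPolynomial (Fin n ⊕ Fin m) ℝ →ₗ[ℝ] ℝ}
  {ψ : (Fin D → ℝ) →ₗ[ℝ] MvPolynomial (Fin n ⊕ Fin m) ℝ}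

lemma sqSection_volume_ratio_bounds (hI : IsBisphereAverage n m I) (hn : 0 < n) (hm : 0 < m)
    (ha : 0 < a) (hb : 0 < b)
    (hψB : ∀ x, ψ x ∈ Biform n m (2 * a) (2 * b)) (hψ0 : ∀ x, I (ψ x) = 0)
    (hψ : ∀ x y, I (ψ x * ψ y) = x ⬝ᵥ y)
    (hP : 2 * ((n + a - 1).choose a * (m + b - 1).choose b) ≤ D) {Q : ℝ} (hQ : 0 < Q)
    (hPQ : ((n + a - 1).choose a * (m + b - 1).choose b : ℕ) ≤ D * Q) :
    ENNReal.ofReal (a.factorial * b.factorial / (2 * √6 * 4 ^ (2 * a + 2 * b) * √Q *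
        (((n : ℝ) / 2 + 2 * a) ^ a * ((m : ℝ) / 2 + 2 * b) ^ b))) ≤
      (volume {x | ψ x + qpoly n m a b ∈ SqSet n m a b} /
        volume (eball (0 : Fin D → ℝ) 1)) ^ ((1 : ℝ) / D) ∧
    (volume {x | ψ x + qpoly n m a b ∈ SqSet n m a b} /
        volume (eball (0 : Fin D → ℝ) 1)) ^ ((1 : ℝ) / D) ≤
      ENNReal.ofReal (2 * √6 * 4 ^ (2 * a + 2 * b) * √Q) := by
  have hP0 : 0 < (n + a - 1).choose a * (m + b - 1).choose b :=
    Nat.mul_pos (hn.trans_le (le_choose hn ha)) (hm.trans_le (le_choose hm hb))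
  have hD : 0 < D := by omega
  have hD' : (0 : ℝ) < D := by exact_mod_cast hD
  have h6 : (2 : ℝ) ≤ √6 := Real.le_sqrt_of_sq_le (by norm_num)
  have h4k : (16 : ℝ) ≤ 4 ^ (a + b) := by
    calc (16 : ℝ) = 4 ^ 2 := by norm_num
      _ ≤ _ := pow_le_pow_right₀ (by norm_num) (by omega)
  have h44 : (4 : ℝ) ^ (2 * a + 2 * b) = 4 ^ (a + b) * 4 ^ (a + b) := by ring
  have hsQ : 0 < √Q := Real.sqrt_pos.mpr hQ
  refine rpow_div_volume_bounds hD (by positivity) (by positivity) ?_ ?_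
  · refine le_trans ?_ (le_volume_sqSection hI hn hm hψB hψ hD (τ := √(8 * Q)) (by positivity) ?_
      hP0)
    · have hg₂ := mul_pos (gaussMoment_pos hn (2 * a)) (gaussMoment_pos hm (2 * b))
      have e1 : √(8 * Q) ≤ 3 * √Q := by
        rw [Real.sqrt_mul (by norm_num)]
        gcongr
        exact Real.sqrt_le_iff.mpr (by norm_num)
      have e2 : √(gaussMoment n (2 * a) * gaussMoment m (2 * b)) ≤
          2 ^ (a + b) * (((n : ℝ) / 2 + 2 * a) ^ a * ((m : ℝ) / 2 + 2 * b) ^ b) := by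
        refine Real.sqrt_le_iff.mpr ⟨by positivity, ?_⟩
        calc _ ≤ ((n : ℝ) + 2 * (2 * a : ℕ)) ^ (2 * a) * ((m : ℝ) + 2 * (2 * b : ℕ)) ^ (2 * b) :=
              mul_le_mul (gaussMoment_le _ _) (gaussMoment_le _ _) (gaussMoment_pos hm _).le
                (by positivity)
          _ = (2 * ((n : ℝ) / 2 + 2 * a)) ^ (2 * a) * (2 * ((m : ℝ) / 2 + 2 * b)) ^ (2 * b) := by
              push_cast
              congr 2 <;> ring
          _ = _ := by
              rw [mul_pow, mul_pow]
              ring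
      have e3 : 8 * 3 * (2 : ℝ) ^ (a + b) ≤ 2 * √6 * 4 ^ (2 * a + 2 * b) := by
        have : (2 : ℝ) ^ (a + b) ≤ 4 ^ (a + b) := by gcongr; norm_num
        rw [h44]
        have : (2 : ℝ) ^ (a + b) * 16 ≤ 4 ^ (a + b) * 4 ^ (a + b) :=
          mul_le_mul this h4k (by norm_num) (by positivity)
        have : (0 : ℝ) ≤ 4 ^ (a + b) * 4 ^ (a + b) := by positivity
        nlinarith
      set A : ℝ := ((n : ℝ) / 2 + 2 * a) ^ a * ((m : ℝ) / 2 + 2 * b) ^ b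
      have hA : 0 < A := by positivity
      have e4 : 8 * √(8 * Q) * √(gaussMoment n (2 * a) * gaussMoment m (2 * b)) ≤
          2 * √6 * 4 ^ (2 * a + 2 * b) * √Q * A := by
        calc _ ≤ 8 * (3 * √Q) * (2 ^ (a + b) * A) := by gcongr
          _ = 8 * 3 * 2 ^ (a + b) * (√Q * A) := by ring
          _ ≤ 2 * √6 * 4 ^ (2 * a + 2 * b) * (√Q * A) := by gcongr ?_ * _
          _ = _ := by ring
      gcongr
    · rw [Real.sq_sqrt (by positivity)]
      linarith
  · set P := (n + a - 1).choose a * (m + b - 1).choose b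
    set s := D / (2 * P)
    have hs : 0 < s := Nat.div_pos hP (by omega)
    have hs' : (0 : ℝ) < s := by exact_mod_cast hs
    have hs1 : s * (2 * P) ≤ D := Nat.div_mul_le_self D (2 * P)
    have hs2 : (D : ℝ) ≤ 4 * P * s := by
      have h := Nat.lt_mul_div_succ D (show 0 < 2 * P by omega)
      have : D ≤ 4 * P * s := by
        change D < 2 * P * (s + 1) at h
        nlinarith
      exact_mod_cast this
    refine (volume_sqSection_le hI hn hm hψ0 hψ hs).trans ?_
    gcongr ENNReal.ofReal ?_ * _
    have e1 : 1 / √s ≤ 2 * √Q := by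
      rw [div_le_iff₀ (by positivity)]
      have : 1 ≤ 4 * Q * s := by
        refine le_of_mul_le_mul_left ?_ hD'
        nlinarith
      calc (1 : ℝ) ≤ √(4 * Q * s) := Real.one_le_sqrt.mpr this
        _ = √4 * √Q * √s := by rw [Real.sqrt_mul (by positivity), Real.sqrt_mul (by positivity)]
        _ = 2 * √Q * √s := by
          rw [show (4 : ℝ) = 2 ^ 2 by norm_num, Real.sqrt_sq (by norm_num)]
    have e2 : ((25 : ℝ) ^ P) ^ s ≤ 5 ^ D := by
      rw [show (25 : ℝ) = 5 ^ 2 by norm_num, ← pow_mul, ← pow_mul]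
      exact pow_le_pow_right₀ (by norm_num) (by linarith)
    calc _ ≤ 5 ^ D * (6 * 4 ^ (a + b) * (2 * √Q)) ^ D := by
          rw [div_eq_mul_one_div (6 * 4 ^ (a + b) : ℝ)]
          gcongr
      _ = (60 * 4 ^ (a + b) * √Q) ^ D := by rw [← mul_pow]; ring
      _ ≤ _ := by
        rw [h44, ← mul_assoc (2 * √6)]
        gcongr ?_ ^ D
        gcongr ?_ * _ * _
        nlinarith

lemma rpow_half_eq (x : ℝ) (hx : 0 ≤ x) (k : ℕ) : x ^ ((k : ℝ) / 2) = √(x ^ k) := by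
  rw [Real.sqrt_eq_rpow, ← Real.rpow_natCast, ← Real.rpow_mul hx]
  ring_nf

end

end BiformPaper

open BiformPaper in
/-- **Theorem (bounds on the volume of the section of sums of squares biforms).**
For integers `n, m ≥ 3` and positive integers `k₁, k₂`:
`d_{2k₁,2k₂} ≤ (Vol S̃q / Vol B_𝓜)^{1/D_𝓜} ≤ e_{2k₁,2k₂}`. -/
theorem statement2 (n m k₁ k₂ : ℕ) (hn : 3 ≤ n) (hm : 3 ≤ m) (hk₁ : 0 < k₁) (hk₂ : 0 < k₂)
    (D : ℕ)
    (hD : D = Nat.choose (n + 2 * k₁ - 1) (2 * k₁) * Nat.choose (m + 2 * k₂ - 1) (2 * k₂) - 1)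
    (σ₁ : Measure (Fin n → ℝ)) (σ₂ : Measure (Fin m → ℝ))
    (hσ₁ : IsSphereMeasure n σ₁) (hσ₂ : IsSphereMeasure m σ₂)
    (ψ : (Fin D → ℝ) →ₗ[ℝ] MvPolynomial (Fin n ⊕ Fin m) ℝ)
    (hψ : IsUnitaryParam n m D σ₁ σ₂ (MSet n m k₁ k₂ σ₁ σ₂) ψ) :
    ENNReal.ofReal
        (if k₁ = 1 ∧ k₂ = 1 then
          (2 : ℝ) ^ (-(8 : ℝ)) * (6 : ℝ) ^ (-(1 : ℝ) / 2) *
            Real.sqrt ((n : ℝ) * (m : ℝ) + (n : ℝ) + (m : ℝ)) /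
              (((n : ℝ) + 4) * ((m : ℝ) + 4))
        else
          ((k₁.factorial : ℝ) * (k₂.factorial : ℝ)) ^ ((3 : ℝ) / 2) /
              (2 * Real.sqrt 6 * (4 : ℝ) ^ (2 * k₁ + 2 * k₂) *
                Real.sqrt (((2 * k₁).factorial : ℝ) * ((2 * k₂).factorial : ℝ))) *
            ((n : ℝ) ^ ((k₁ : ℝ) / 2) * (m : ℝ) ^ ((k₂ : ℝ) / 2) /
              (((n : ℝ) / 2 + 2 * (k₁ : ℝ)) ^ k₁ * ((m : ℝ) / 2 + 2 * (k₂ : ℝ)) ^ k₂))) ≤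
      (volume (⇑ψ ⁻¹' tilde n m k₁ k₂ σ₁ σ₂ (SqSet n m k₁ k₂)) /
          volume (⇑ψ ⁻¹' bball n m k₁ k₂ σ₁ σ₂)) ^ ((1 : ℝ) / (D : ℝ)) ∧
    (volume (⇑ψ ⁻¹' tilde n m k₁ k₂ σ₁ σ₂ (SqSet n m k₁ k₂)) /
        volume (⇑ψ ⁻¹' bball n m k₁ k₂ σ₁ σ₂)) ^ ((1 : ℝ) / (D : ℝ)) ≤
      ENNReal.ofReal
        (if k₁ = 1 ∧ k₂ = 1 then
          (2 : ℝ) ^ (10 : ℕ) * Real.sqrt 6 /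
            Real.sqrt ((n : ℝ) * (m : ℝ) + (n : ℝ) + (m : ℝ))
        else
          2 * Real.sqrt 6 * (4 : ℝ) ^ (2 * k₁ + 2 * k₂) *
            Real.sqrt (((2 * k₁).factorial : ℝ) * ((2 * k₂).factorial : ℝ) /
              ((k₁.factorial : ℝ) * (k₂.factorial : ℝ))) *
            ((n : ℝ) ^ (-(k₁ : ℝ) / 2) * (m : ℝ) ^ (-(k₂ : ℝ) / 2))) := by
  have hI := isBisphereAverage_sphereAverage hσ₁ hσ₂
  have hM : ∀ x, ψ x ∈ MSet n m k₁ k₂ σ₁ σ₂ := fun x => hψ.range ▸ Set.mem_range_self x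
  have hip : ∀ x y, sphereAverage hσ₁ hσ₂ (ψ x * ψ y) = x ⬝ᵥ y := fun x y => by
    rw [← bip_eq_sphereAverage, hψ.ip]; rfl
  have hset : ⇑ψ ⁻¹' tilde n m k₁ k₂ σ₁ σ₂ (SqSet n m k₁ k₂) =
      {x | ψ x + qpoly n m k₁ k₂ ∈ SqSet n m k₁ k₂} := by
    ext x
    exact and_iff_right (hM x)
  have hball : ⇑ψ ⁻¹' bball n m k₁ k₂ σ₁ σ₂ = eball 0 1 := by
    ext x
    refine (and_iff_right (hM x)).trans ?_
    rw [bip_eq_sphereAverage hσ₁ hσ₂, hip]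
    simp [eball]
  have hP := two_mul_choose_mul_choose_le hn hm hk₁ hk₂ hD
  have main := fun Q => sqSection_volume_ratio_bounds (Q := Q) hI (by omega) (by omega) hk₁ hk₂
    (fun x => (hM x).1) (fun x => (bavg_eq_sphereAverage hσ₁ hσ₂ _).symm.trans (hM x).2) hip hP
  rw [hset, hball]
  have hn0 : (0 : ℝ) < n := by exact_mod_cast (by omega : 0 < n)
  have hm0 : (0 : ℝ) < m := by exact_mod_cast (by omega : 0 < m)
  split_ifs with h
  · obtain ⟨rfl, rfl⟩ := h
    have hS : 0 < (n : ℝ) * m + n + m := by positivity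
    have hPQ : (((n + 1 - 1).choose 1 * (m + 1 - 1).choose 1 : ℕ) : ℝ) ≤
        D * (4 / ((n : ℝ) * m + n + m)) := by
      rw [← mul_div_assoc, le_div_iff₀ hS]
      exact_mod_cast mul_add_add_le hn hm hD
    have hQ : √(4 / ((n : ℝ) * m + n + m)) = 2 / √((n : ℝ) * m + n + m) := by
      rw [Real.sqrt_div (by norm_num), show (4 : ℝ) = 2 ^ 2 by norm_num,
        Real.sqrt_sq (by norm_num)]
    have hm' := main _ (by positivity) hPQ
    rw [hQ] at hm'
    convert hm' using 2
    · congr 1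
      rw [neg_div, Real.rpow_neg (by norm_num), Real.rpow_neg (by norm_num), ← Real.sqrt_eq_rpow]
      norm_num
      field_simp
      ring
    · congr 1
      field_simp
      norm_num
  · have hF : (0 : ℝ) < (2 * k₁).factorial * (2 * k₂).factorial := by positivity
    have hG : (0 : ℝ) < k₁.factorial * k₂.factorial := by positivity
    have hPQ : (((n + k₁ - 1).choose k₁ * (m + k₂ - 1).choose k₂ : ℕ) : ℝ) ≤
        D * ((2 * k₁).factorial * (2 * k₂).factorial /
          (k₁.factorial * k₂.factorial) / ((n : ℝ) ^ k₁ * (m : ℝ) ^ k₂)) := by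
      rw [div_div, ← mul_div_assoc, le_div_iff₀ (by positivity)]
      exact_mod_cast choose_mul_choose_le hn hm hk₁ hk₂ hD
    have hm' := main _ (by positivity) hPQ
    rw [Real.sqrt_div (by positivity), Real.sqrt_mul (by positivity : (0 : ℝ) ≤ (n : ℝ) ^ k₁)] at hm'
    rw [neg_div, neg_div, Real.rpow_neg hn0.le, Real.rpow_neg hm0.le, rpow_half_eq _ hn0.le,
      rpow_half_eq _ hm0.le]
    set F : ℝ := (2 * k₁).factorial * (2 * k₂).factorial
    set G : ℝ := k₁.factorial * k₂.factorial
    have hG' : G ^ ((3 : ℝ) / 2) = G * √G := by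
      rw [show (3 : ℝ) / 2 = 1 + 1 / 2 by norm_num, Real.rpow_add hG, Real.rpow_one,
        Real.sqrt_eq_rpow]
    rw [hG']
    convert hm' using 2
    · congr 1
      rw [Real.sqrt_div hF.le]
      field_simp
    · congr 1
      field_simp
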